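/- Let m ≥ 1 be an integer, let μ, ν ≥ 0 be integers with μ + ν = m, and let α ∈ (0,1). There is a constant C, depending only on m and α, such that for every R with 0 < R ≤ 1 and every h of class C^{α}(D), the function T^ν T̄^μ h is of class C^{m+α}(D) and satisfies ‖T^ν T̄^μ h‖^{(m)} ≤ C ‖h‖, where T^ν and T̄^μ denote iterates of T and T̄ (with T^0 = T̄^0 = identity). -/

import Mathlib

open Complex MeasureTheory Metric ENNReal NNReal

noncomputable section

/-- Wirtinger derivative `∂`. -/
def wD (f : ℂ → ℂ) : ℂ → ℂ := fun z =>
  (fderiv ℝ f z 1 - Complex.I * fderiv ℝ f z Complex.I) / 2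

/-- Wirtinger derivative `∂̄`. -/
def wDbar (f : ℂ → ℂ) : ℂ → ℂ := fun z =>
  (fderiv ℝ f z 1 + Complex.I * fderiv ℝ f z Complex.I) / 2

/-- Iterated Wirtinger derivative `∂^i ∂̄^j`. -/
def wDij (i j : ℕ) (f : ℂ → ℂ) : ℂ → ℂ := wD^[i] (wDbar^[j] f)

/-- α-Hölder constant of `f` on `A`, valued in `ℝ≥0∞`. -/
def Hol (α : ℝ) (A : Set ℂ) (f : ℂ → ℂ) : ℝ≥0∞ :=
  ⨆ z ∈ A, ⨆ z' ∈ A, ⨆ _ : z ≠ z', (‖f z - f z'‖₊ : ℝ≥0∞) / (‖z - z'‖₊ : ℝ≥0∞) ^ α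

/-- `f` is of class `C^{k+α}(D)`, `D` the closed disk of radius `R`. -/
def CkHolder (k : ℕ) (α R : ℝ) (f : ℂ → ℂ) : Prop :=
  (∃ U : Set ℂ, IsOpen U ∧ closedBall (0:ℂ) R ⊆ U ∧ ContDiffOn ℝ k f U) ∧
  ∀ i j : ℕ, i + j = k → Hol α (closedBall (0:ℂ) R) (wDij i j f) < ⊤

/-- The norm `‖f‖ = sup_D |f| + (2R)^α H_α[f]`. -/
def hnorm (α R : ℝ) (f : ℂ → ℂ) : ℝ≥0∞ :=
  (⨆ z ∈ closedBall (0:ℂ) R, (‖f z‖₊ : ℝ≥0∞)) +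
    ENNReal.ofReal ((2*R) ^ α) * Hol α (closedBall (0:ℂ) R) f

/-- The norm `‖f‖^{(k)} = max_{i+j=k} ‖∂^i∂̄^j f‖`. -/
def hnormK (k : ℕ) (α R : ℝ) (f : ℂ → ℂ) : ℝ≥0∞ :=
  ⨆ p ∈ Finset.HasAntidiagonal.antidiagonal k, hnorm α R (wDij p.1 p.2 f)

/-- `C_0^{k+α}(D)`: members of `C^{k+α}(D)` all of whose derivatives of order `≤ k-1`
vanish at the origin. -/
def C0kHolder (k : ℕ) (α R : ℝ) (f : ℂ → ℂ) : Prop :=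
  CkHolder k α R f ∧ ∀ i j : ℕ, i + j < k → wDij i j f 0 = 0

/-- The Cauchy–Green operator `T`. -/
def Tcg (R : ℝ) (g : ℂ → ℂ) : ℂ → ℂ := fun z =>
  -(Real.pi : ℂ)⁻¹ * ∫ ζ in closedBall (0:ℂ) R, g ζ / (ζ - z)

/-- The operator `T̄ g = conj (T (conj g))`. -/
def Tcgbar (R : ℝ) (g : ℂ → ℂ) : ℂ → ℂ := fun z =>
  (starRingEnd ℂ) (Tcg R (fun w => (starRingEnd ℂ) (g w)) z)

/-- The Cauchy integral `S`. -/
def Scau (R : ℝ) (f : ℂ → ℂ) : ℂ → ℂ := fun z =>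
  (2 * Real.pi * Complex.I)⁻¹ * ∮ ζ in C(0, R), f ζ / (ζ - z)

/-- The operator `S̄ f = conj (S (conj f))`. -/
def Scaubar (R : ℝ) (f : ℂ → ℂ) : ℂ → ℂ := fun z =>
  (starRingEnd ℂ) (Scau R (fun w => (starRingEnd ℂ) (f w)) z)

/-- The boundary operator `S_b`. -/
def Sb (R : ℝ) (f : ℂ → ℂ) : ℂ → ℂ := fun z =>
  (2 * Real.pi * Complex.I)⁻¹ *
    ∫ θ in (0:ℝ)..(2 * Real.pi),
      f (R * Complex.exp (Complex.I * θ)) / (R * Complex.exp (Complex.I * θ) - z) *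
        (-Complex.I * R * Complex.exp (-Complex.I * θ))

/-- The Taylor polynomial `P_k(ζ, z)` of `f` at `z` of degree `k`. -/
def TaylorP (k : ℕ) (f : ℂ → ℂ) (ζ z : ℂ) : ℂ :=
  ∑ l ∈ Finset.range (k+1), ((Nat.factorial l : ℂ))⁻¹ *
    ∑ p ∈ Finset.HasAntidiagonal.antidiagonal l,
      wDij p.1 p.2 f z * (ζ - z) ^ p.1 * ((starRingEnd ℂ) ζ - (starRingEnd ℂ) z) ^ p.2

/-- The operator `^{k+2}T`. -/
def TkOp (k : ℕ) (R : ℝ) (f : ℂ → ℂ) : ℂ → ℂ := fun z =>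
  -((Nat.factorial (k+1) : ℂ) / (Real.pi : ℂ)) *
    ∫ ζ in closedBall (0:ℂ) R, (f ζ - TaylorP k f ζ z) / (ζ - z) ^ (k + 2)

end

noncomputable section

/-- Norm `‖f‖` computed on the open disk. -/
def hnormB (α R : ℝ) (f : ℂ → ℂ) : ℝ≥0∞ :=
  (⨆ z ∈ ball (0:ℂ) R, (‖f z‖₊ : ℝ≥0∞)) +
    ENNReal.ofReal ((2*R) ^ α) * Hol α (ball (0:ℂ) R) f

/-- Norm `‖f‖^{(k)}` computed on the open disk. -/
def hnormKB (k : ℕ) (α R : ℝ) (f : ℂ → ℂ) : ℝ≥0∞ :=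
  ⨆ p ∈ Finset.HasAntidiagonal.antidiagonal k, hnormB α R (wDij p.1 p.2 f)

/-- `f` is of class `C^{k+α}(D)`, in the sense that it is `C^k` on the open disk,
all its derivatives of order `≤ k` extend continuously to the closed disk, and its
derivatives of order `k` have finite `α`-Hölder constant. -/
def CkHolderBall (k : ℕ) (α R : ℝ) (f : ℂ → ℂ) : Prop :=
  ContDiffOn ℝ k f (ball (0:ℂ) R) ∧
  (∀ i j : ℕ, i + j ≤ k → ∃ g : ℂ → ℂ, ContinuousOn g (closedBall (0:ℂ) R) ∧
    Set.EqOn (wDij i j f) g (ball (0:ℂ) R)) ∧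
  ∀ i j : ℕ, i + j = k → Hol α (ball (0:ℂ) R) (wDij i j f) < ⊤

end



lemma intRpow (s : ℝ) (hs : -2 < s) (r : ℝ) :
    IntegrableOn (fun w : ℂ => ‖w‖ ^ s) (ball 0 r) := by
  rw [show (fun w : ℂ => ‖w‖ ^ s) = (fun w : ℂ => (fun y : ℝ => y ^ s) ‖w‖) from rfl,
    integrableOn_fun_norm_addHaar (μ := volume) (f := fun y : ℝ => y ^ s)]
  rw [Complex.finrank_real_complex]
  rcases le_or_gt r 0 with h0 | h0
  · simp [Set.Ioo_eq_empty_of_le h0]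
  have h1 : IntegrableOn (fun y : ℝ => y ^ (s + 1)) (Set.Ioo 0 r) := by
    have := intervalIntegral.intervalIntegrable_rpow' (a := 0) (b := r) (r := s + 1) (by linarith)
    rw [intervalIntegrable_iff_integrableOn_Ioo_of_le h0.le] at this
    exact this
  refine h1.congr_fun ?_ measurableSet_Ioo
  intro y hy
  have : 0 < y := hy.1
  simp only [Nat.add_one_sub_one, pow_one, smul_eq_mul]
  rw [Real.rpow_add this, Real.rpow_one, mul_comm]

lemma intRadial (Φ : ℂ → ℝ) (hm : Measurable Φ) (s t C : ℝ) (hs : -2 < s) (ht : t < -2)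
    (h1 : ∀ w, ‖w‖ < 1 → |Φ w| ≤ C * ‖w‖ ^ s) (h2 : ∀ w, 1 ≤ ‖w‖ → |Φ w| ≤ ‖w‖ ^ t) :
    Integrable Φ := by
  have e1 : Integrable ((ball (0:ℂ) 1).indicator (fun w : ℂ => C * ‖w‖ ^ s)) :=
    (integrable_indicator_iff measurableSet_ball).2 (Integrable.const_mul (intRpow s hs 1) C)
  have e2 : Integrable (fun w : ℂ => (2:ℝ) ^ (-t) * (1 + ‖w‖) ^ (-(-t))) :=
    (integrable_one_add_norm (by rw [Complex.finrank_real_complex]; push_cast; linarith)).const_mul _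
  refine (e1.add e2).mono' hm.aestronglyMeasurable (Filter.Eventually.of_forall fun w => ?_)
  have p2 : 0 ≤ (2:ℝ) ^ (-t) * (1 + ‖w‖) ^ (-(-t)) := by positivity
  rw [Real.norm_eq_abs]
  simp only [Pi.add_apply]
  by_cases hw : ‖w‖ < 1
  · rw [Set.indicator_of_mem (by simpa using hw)]
    linarith [h1 w hw]
  · rw [Set.indicator_of_notMem (by simpa using hw), zero_add]
    push Not at hw
    refine (h2 w hw).trans ?_
    rw [neg_neg, Real.rpow_neg (by norm_num), ← Real.inv_rpow (by norm_num),
      ← Real.mul_rpow (by norm_num) (by positivity)]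
    exact Real.rpow_le_rpow_of_nonpos (by positivity) (by linarith) (by linarith)

/-- the two radial kernels at scale d -/
noncomputable def kA (α d : ℝ) (w : ℂ) : ℝ := ‖w‖ ^ (α - 2) * (max ‖w‖ (d / 2))⁻¹
noncomputable def kB (α d : ℝ) (w : ℂ) : ℝ := ‖w‖⁻¹ * (max ‖w‖ (d / 2)) ^ (α - 2)

lemma kA_int (α : ℝ) (hα : α ∈ Set.Ioo (0:ℝ) 1) : Integrable (kA α 1) := by
  refine intRadial _ ?_ (α - 2) (α - 3) 2 (by linarith [hα.1]) (by linarith [hα.2]) ?_ ?_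
  · unfold kA; fun_prop
  · intro w hw
    unfold kA
    rw [abs_of_nonneg (by positivity), mul_comm 2]
    gcongr
    rw [inv_le_comm₀ (by positivity) (by norm_num)]
    exact le_trans (by norm_num) (le_max_right _ _)
  · intro w hw
    unfold kA
    rw [abs_of_nonneg (by positivity), max_eq_left (by linarith), ← Real.rpow_neg_one,
      ← Real.rpow_add (by linarith)]
    apply le_of_eq; congr 1; ring

lemma kB_int (α : ℝ) (hα : α ∈ Set.Ioo (0:ℝ) 1) : Integrable (kB α 1) := by
  refine intRadial _ ?_ (-1) (α - 3) ((1 / 2 : ℝ) ^ (α - 2)) (by norm_num) (by linarith [hα.2]) ?_ ?_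
  · unfold kB; fun_prop
  · intro w hw
    unfold kB
    rw [abs_of_nonneg (by positivity), mul_comm, Real.rpow_neg_one]
    refine mul_le_mul_of_nonneg_right ?_ (by positivity)
    exact Real.rpow_le_rpow_of_nonpos (by norm_num) (le_max_right _ _) (by linarith [hα.2])
  · intro w hw
    unfold kB
    rw [abs_of_nonneg (by positivity), max_eq_left (by linarith), ← Real.rpow_neg_one,
      ← Real.rpow_add (by linarith)]
    apply le_of_eq; congr 1; ring

lemma kA_scale (α d : ℝ) (hd : 0 < d) (w : ℂ) : kA α d w = d ^ (α - 3) * kA α 1 (d⁻¹ • w) := by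
  unfold kA
  have h : max ‖w‖ (d/2) = d * max (d⁻¹ * ‖w‖) (1/2) := by
    rw [mul_max_of_nonneg _ _ hd.le]; field_simp
  rw [norm_smul, norm_inv, Real.norm_of_nonneg hd.le, h, Real.mul_rpow (by positivity) (by positivity),
    mul_inv, Real.inv_rpow hd.le, show α - 3 = (α - 2) + (-1) by ring, Real.rpow_add hd,
    Real.rpow_neg_one]
  have : d ^ (α - 2) ≠ 0 := by positivity
  field_simp

lemma kB_scale (α d : ℝ) (hd : 0 < d) (w : ℂ) : kB α d w = d ^ (α - 3) * kB α 1 (d⁻¹ • w) := by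
  unfold kB
  have h : max ‖w‖ (d/2) = d * max (d⁻¹ * ‖w‖) (1/2) := by
    rw [mul_max_of_nonneg _ _ hd.le]; field_simp
  rw [norm_smul, norm_inv, Real.norm_of_nonneg hd.le, h, Real.mul_rpow (by positivity) (by positivity),
    mul_inv, show α - 3 = (α - 2) + (-1) by ring, Real.rpow_add hd,
    Real.rpow_neg_one]
  field_simp

lemma scale_int (k : ℂ → ℝ) (k1 : ℂ → ℝ) (α d : ℝ) (hd : 0 < d) (hk : Integrable k1)
    (h : ∀ w, k w = d ^ (α - 3) * k1 (d⁻¹ • w)) :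
    Integrable k ∧ ∫ w, k w = d ^ (α - 1) * ∫ w, k1 w := by
  have : k = fun w => d ^ (α - 3) * k1 (d⁻¹ • w) := funext h
  rw [this]
  constructor
  · exact (hk.comp_smul (inv_ne_zero hd.ne')).const_mul _
  · rw [integral_const_mul, Measure.integral_comp_inv_smul, Complex.finrank_real_complex,
      smul_eq_mul, abs_of_pos (by positivity), ← mul_assoc, ← Real.rpow_natCast,
      ← Real.rpow_add hd]
    congr 2; push_cast; ring

lemma kernel_le (α : ℝ) (hα : α ∈ Set.Ioo (0:ℝ) 1) (a b ζ : ℂ) :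
    ‖ζ - a‖ ^ (α - 2) * ‖ζ - b‖⁻¹ ≤ kA α ‖a - b‖ (ζ - a) + kB α ‖a - b‖ (ζ - b) := by
  have tri : ‖a - b‖ ≤ ‖ζ - a‖ + ‖ζ - b‖ := by
    have := norm_sub_le (ζ - b) (ζ - a)
    rw [show ζ - b - (ζ - a) = a - b by ring] at this; linarith
  have pA : 0 ≤ kA α ‖a - b‖ (ζ - a) := by unfold kA; positivity
  have pB : 0 ≤ kB α ‖a - b‖ (ζ - b) := by unfold kB; positivity
  rcases le_total ‖ζ - a‖ ‖ζ - b‖ with h | h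
  · rcases eq_or_lt_of_le (norm_nonneg (ζ - b)) with h0 | h0
    · rw [← h0]; simp; linarith
    refine le_trans ?_ (le_add_of_nonneg_right pB)
    unfold kA
    gcongr 
    · rcases eq_or_lt_of_le (norm_nonneg (ζ - a)) with h1 | h1
      · rw [← h1] at tri
        apply lt_max_of_lt_right
        have : a ≠ b := by
          rintro rfl
          rw [← h1] at h0; exact lt_irrefl _ h0
        have := norm_pos_iff.2 (sub_ne_zero.2 this)
        linarith
      · exact lt_max_of_lt_left h1
    · exact max_le h (by linarith)
  · rcases eq_or_lt_of_le (norm_nonneg (ζ - a)) with h0 | h0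
    · rw [← h0, Real.zero_rpow (by linarith [hα.2])]; simp; linarith
    refine le_trans ?_ (le_add_of_nonneg_left pA)
    unfold kB
    rcases eq_or_lt_of_le (norm_nonneg (ζ - b)) with h1 | h1
    · simp [← h1]
    rw [mul_comm]
    refine mul_le_mul_of_nonneg_left ?_ (by positivity)
    exact Real.rpow_le_rpow_of_nonpos (lt_max_of_lt_left h1) (max_le h (by linarith)) (by linarith [hα.2])

/-- bound for the double kernel -/
lemma kernel_bound (α : ℝ) (hα : α ∈ Set.Ioo (0:ℝ) 1) : ∃ C : ℝ, 0 ≤ C ∧ ∀ a b : ℂ, a ≠ b →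
    ∃ G : ℂ → ℝ, Integrable G ∧ (∀ ζ, ‖ζ - a‖ ^ (α - 2) * ‖ζ - b‖⁻¹ ≤ G ζ) ∧
      ∫ ζ in closedBall (0:ℂ) 1, G ζ ≤ C * ‖a - b‖ ^ (α - 1) := by
  have nA : ∀ d w, 0 ≤ kA α d w := fun d w => by
    unfold kA; have := norm_nonneg w; have := le_max_left ‖w‖ (d/2); positivity
  have nB : ∀ d w, 0 ≤ kB α d w := fun d w => by
    unfold kB; have := norm_nonneg w; have := le_max_left ‖w‖ (d/2); positivity
  refine ⟨(∫ w, kA α 1 w) + ∫ w, kB α 1 w,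
    add_nonneg (integral_nonneg (nA 1)) (integral_nonneg (nB 1)), fun a b hab => ?_⟩
  have hd : 0 < ‖a - b‖ := norm_pos_iff.2 (sub_ne_zero.2 hab)
  obtain ⟨iA, vA⟩ := scale_int _ _ α _ hd (kA_int α hα) (kA_scale α _ hd)
  obtain ⟨iB, vB⟩ := scale_int _ _ α _ hd (kB_int α hα) (kB_scale α _ hd)
  have jA := iA.comp_sub_right a
  have jB := iB.comp_sub_right b
  refine ⟨fun ζ => kA α ‖a - b‖ (ζ - a) + kB α ‖a - b‖ (ζ - b), jA.add jB, kernel_le α hα a b, ?_⟩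
  refine (setIntegral_le_integral (jA.add jB)
    (Filter.Eventually.of_forall fun ζ => add_nonneg (nA _ _) (nB _ _))).trans ?_
  simp only [Pi.add_apply]
  rw [integral_add jA jB, integral_sub_right_eq_self (kA α ‖a - b‖) a,
    integral_sub_right_eq_self (kB α ‖a - b‖) b, vA, vB]
  apply le_of_eq; ring

/-- single kernel -/
lemma single_kernel (s : ℝ) (hs : -2 < s) : ∃ C : ℝ, 0 ≤ C ∧ ∀ a ∈ closedBall (0:ℂ) 1,
    IntegrableOn (fun ζ => ‖ζ - a‖ ^ s) (closedBall (0:ℂ) 1) ∧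
      ∫ ζ in closedBall (0:ℂ) 1, ‖ζ - a‖ ^ s ≤ C := by
  have key : Integrable ((ball (0:ℂ) 3).indicator fun w => ‖w‖ ^ s) :=
    (intRpow s hs 3).integrable_indicator measurableSet_ball
  have nn : ∀ w, 0 ≤ (ball (0:ℂ) 3).indicator (fun w => ‖w‖ ^ s) w := fun w =>
    Set.indicator_nonneg (fun _ _ => by positivity) _
  refine ⟨∫ w, (ball (0:ℂ) 3).indicator (fun w => ‖w‖ ^ s) w, integral_nonneg nn, fun a ha => ?_⟩
  have k2 := key.comp_sub_right a
  have eq : Set.EqOn (fun ζ => (ball (0:ℂ) 3).indicator (fun w => ‖w‖ ^ s) (ζ - a))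
      (fun ζ => ‖ζ - a‖ ^ s) (closedBall (0:ℂ) 1) := by
    intro ζ hζ
    have : ζ - a ∈ ball (0:ℂ) 3 := by
      simp only [mem_closedBall_zero_iff, mem_ball_zero_iff] at *
      linarith [norm_sub_le ζ a]
    simp only [Set.indicator_of_mem this]
  refine ⟨k2.integrableOn.congr_fun eq measurableSet_closedBall, ?_⟩
  rw [← setIntegral_congr_fun measurableSet_closedBall eq]
  refine (setIntegral_le_integral k2 (Filter.Eventually.of_forall fun ζ => nn _)).trans ?_
  rw [integral_sub_right_eq_self ((ball (0:ℂ) 3).indicator fun w => ‖w‖ ^ s) a]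


lemma rot_int_on (θ : ℝ) (f : ℂ → ℂ) (hf : IntegrableOn f (closedBall (0:ℂ) 1)) :
    IntegrableOn (fun ζ => f (exp (θ * I) * ζ)) (closedBall (0:ℂ) 1) := by
  let c : Circle := Circle.exp θ
  have hmp := (rotation c).measurePreserving
  have hpre : (rotation c) ⁻¹' (closedBall (0:ℂ) 1) = closedBall (0:ℂ) 1 := by
    ext x; simp only [Set.mem_preimage, mem_closedBall_zero_iff, LinearIsometryEquiv.norm_map]
  have := (hmp.integrableOn_comp_preimage
    (rotation c).toHomeomorph.measurableEmbedding (f := f) (s := closedBall 0 1)).2 hf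
  rw [hpre] at this
  simpa [Function.comp_def, rotation_apply, c] using this

lemma rot_int {E : Type*} [NormedAddCommGroup E] [NormedSpace ℝ E] (θ : ℝ) (f : ℂ → E) :
    ∫ ζ in closedBall (0:ℂ) 1, f (exp (θ * I) * ζ) = ∫ ζ in closedBall (0:ℂ) 1, f ζ := by
  let c : Circle := Circle.exp θ
  have hmp := (rotation c).measurePreserving
  have hpre : (rotation c) ⁻¹' (closedBall (0:ℂ) 1) = closedBall (0:ℂ) 1 := by
    ext x; simp only [Set.mem_preimage, mem_closedBall_zero_iff, LinearIsometryEquiv.norm_map]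
  have := hmp.setIntegral_preimage_emb
    (rotation c).toHomeomorph.measurableEmbedding f (closedBall 0 1)
  rw [hpre] at this
  simpa [rotation_apply, c] using this

lemma circ_avg (ζ z : ℂ) (h : ‖ζ‖ ≠ ‖z‖) :
    ∫ θ in (0:ℝ)..(2 * Real.pi), (exp (θ * I) * ζ - z)⁻¹ =
      if ‖ζ‖ < ‖z‖ then 2 * Real.pi * (-z⁻¹) else 0 := by
  have hp : (2 * Real.pi : ℂ) ≠ 0 := by simp [Real.pi_ne_zero]
  have main : ∀ f : ℂ → ℂ, (∀ u ∈ closedBall (0:ℂ) 1, DifferentiableAt ℂ f u) →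
      ∫ θ in (0:ℝ)..(2 * Real.pi), f (exp (θ * I)) = 2 * Real.pi * f 0 := by
    intro f hf
    have := circleAverage_of_differentiable_on_off_countable (f := f) (c := 0) (R := 1)
      Set.countable_empty (fun u hu => (hf u (by simpa using hu)).continuousAt.continuousWithinAt)
      (fun u hu => hf u (ball_subset_closedBall (by simpa using hu.1)))
    rw [← this, Real.circleAverage_def]
    simp only [circleMap_zero, Complex.ofReal_one, one_mul, real_smul]
    push_cast
    rw [← mul_assoc, mul_inv_cancel₀ hp, one_mul]
  split_ifs with hl
  · have := main (fun u => (u * ζ - z)⁻¹) (fun u hu => by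
      refine DifferentiableAt.inv (by fun_prop) ?_
      intro h0
      have h1 : ‖u‖ * ‖ζ‖ = ‖z‖ := by rw [← norm_mul, sub_eq_zero.1 h0]
      have h2 : ‖u‖ ≤ 1 := by simpa using hu
      nlinarith [norm_nonneg ζ])
    rw [this]; simp
  · have hl' : ‖z‖ < ‖ζ‖ := lt_of_le_of_ne (not_lt.1 hl) (Ne.symm h)
    have := main (fun u => u * (star ζ - star z * u)⁻¹) (fun u hu => by
      refine DifferentiableAt.mul (by fun_prop) (DifferentiableAt.inv (by fun_prop) ?_)
      intro h0
      have h1 : ‖ζ‖ = ‖z‖ * ‖u‖ := by rw [← norm_star ζ, ← norm_star z, ← norm_mul, sub_eq_zero.1 h0]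
      have h2 : ‖u‖ ≤ 1 := by simpa using hu
      nlinarith [norm_nonneg z])
    simp only [zero_mul, mul_zero] at this
    have h3 : ∀ θ : ℝ, (exp (θ * I) * ζ - z)⁻¹ =
        (starRingEnd ℂ) (exp (θ * I) * (star ζ - star z * exp (θ * I))⁻¹) := by
      intro θ
      have e1 : (starRingEnd ℂ) (exp (θ * I)) = (exp (θ * I))⁻¹ := by
        rw [← Complex.exp_conj, ← Complex.exp_neg]; simp
      simp only [map_mul, map_inv₀, map_sub, e1, RCLike.star_def, Complex.conj_conj]
      rw [← mul_inv]
      congr 1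
      have := Complex.exp_ne_zero (θ * I)
      field_simp
    simp_rw [h3]
    rw [show (fun θ : ℝ => (starRingEnd ℂ) (exp (θ * I) * (star ζ - star z * exp (θ * I))⁻¹)) =
      fun θ : ℝ => conjCLE.toContinuousLinearMap (exp (θ * I) * (star ζ - star z * exp (θ * I))⁻¹) from rfl]
    rw [intervalIntegral.integral_of_le Real.two_pi_pos.le] at this ⊢
    exact (integral_conj (μ := volume.restrict (Set.Ioc 0 (2 * Real.pi)))
      (f := fun θ : ℝ => exp (θ * I) * (star ζ - star z * exp (θ * I))⁻¹)).trans (by rw [this]; simp)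

lemma inv_intOn (z : ℂ) (hz : z ∈ closedBall (0:ℂ) 1) :
    IntegrableOn (fun ζ => (ζ - z)⁻¹) (closedBall (0:ℂ) 1) := by
  obtain ⟨C, _, hC⟩ := single_kernel (-1) (by norm_num)
  refine ((hC z hz).1).mono' (by fun_prop) (Filter.Eventually.of_forall fun ζ => ?_)
  rw [norm_inv, Real.rpow_neg_one]

lemma T_one (z : ℂ) (hz : z ∈ closedBall (0:ℂ) 1) :
    ∫ ζ in closedBall (0:ℂ) 1, (ζ - z)⁻¹ = - Real.pi * (starRingEnd ℂ) z := by
  set μ := volume.restrict (closedBall (0:ℂ) 1) with hμ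
  set ν := volume.restrict (Set.Ioc 0 (2 * Real.pi)) with hν
  have hp : (2 * Real.pi : ℂ) ≠ 0 := by simp [Real.pi_ne_zero]
  have hintg : Integrable (Function.uncurry fun (θ : ℝ) (ζ : ℂ) => (exp (θ * I) * ζ - z)⁻¹) (ν.prod μ) := by
    rw [integrable_prod_iff (by unfold Function.uncurry; fun_prop)]
    constructor
    · exact Filter.Eventually.of_forall fun θ => rot_int_on θ (fun ζ => (ζ - z)⁻¹) (inv_intOn z hz)
    · have : (fun θ : ℝ => ∫ ζ, ‖Function.uncurry (fun (θ : ℝ) (ζ : ℂ) => (exp (θ * I) * ζ - z)⁻¹) (θ, ζ)‖ ∂μ)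
          = fun θ : ℝ => ∫ ζ, ‖(ζ - z)⁻¹‖ ∂μ := by
        funext θ
        exact rot_int θ (fun ζ => ‖(ζ - z)⁻¹‖)
      rw [this]
      exact integrable_const _
  have h1 : ∫ θ, ∫ ζ, (exp (θ * I) * ζ - z)⁻¹ ∂μ ∂ν = 2 * Real.pi * ∫ ζ, (ζ - z)⁻¹ ∂μ := by
    have : ∀ θ : ℝ, ∫ ζ, (exp (θ * I) * ζ - z)⁻¹ ∂μ = ∫ ζ, (ζ - z)⁻¹ ∂μ := fun θ =>
      rot_int θ (fun ζ => (ζ - z)⁻¹)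
    simp_rw [this]
    rw [integral_const]
    simp [hν, Real.pi_pos.le]
  rw [integral_integral_swap hintg] at h1
  have h2 : ∫ ζ, ∫ θ, (exp (θ * I) * ζ - z)⁻¹ ∂ν ∂μ =
      ∫ ζ, (ball (0:ℂ) ‖z‖).indicator (fun _ => 2 * Real.pi * (-z⁻¹)) ζ ∂μ := by
    refine integral_congr_ae ?_
    have hs : volume (sphere (0:ℂ) ‖z‖) = 0 := Measure.addHaar_sphere _ _ _
    have : ∀ᵐ ζ ∂μ, ζ ∉ sphere (0:ℂ) ‖z‖ := ae_restrict_of_ae (measure_eq_zero_iff_ae_notMem.1 hs)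
    filter_upwards [this] with ζ hζ
    have := circ_avg ζ z (by simpa using hζ)
    rw [intervalIntegral.integral_of_le Real.two_pi_pos.le] at this
    rw [this]
    simp [Set.indicator]
  rw [h2, integral_indicator measurableSet_ball, hμ, Measure.restrict_restrict measurableSet_ball,
    Set.inter_eq_left.2 (ball_subset_closedBall.trans (closedBall_subset_closedBall (by simpa using hz))),
    setIntegral_const] at h1
  have : volume.real (ball (0:ℂ) ‖z‖) = Real.pi * ‖z‖ ^ 2 := by
    rw [Measure.real, Complex.volume_ball]
    simp [mul_comm]
  rw [this] at h1
  apply mul_left_cancel₀ hp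
  rw [← h1]
  rcases eq_or_ne z 0 with rfl | h0
  · simp
  have : (‖z‖ : ℂ) ^ 2 = z * (starRingEnd ℂ) z := by
    rw [Complex.mul_conj, Complex.normSq_eq_norm_sq]; push_cast; rfl
  rw [real_smul]
  push_cast
  rw [this]
  field_simp


/-- closed unit disk -/
abbrev DD : Set ℂ := closedBall (0:ℂ) 1
/-- open unit disk -/
abbrev UU : Set ℂ := ball (0:ℂ) 1

/-- Hölder class with bound B -/
def HP (α : ℝ) (f : ℂ → ℂ) (B : ℝ) : Prop :=
  (∀ z ∈ DD, ‖f z‖ ≤ B) ∧ ∀ z ∈ DD, ∀ w ∈ DD, ‖f z - f w‖ ≤ B * ‖z - w‖ ^ α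

/-- the Beurling-type operator -/
noncomputable def PiOp (f : ℂ → ℂ) (z : ℂ) : ℂ :=
  -(Real.pi : ℂ)⁻¹ * ∫ ζ in DD, (f ζ - f z) / (ζ - z) ^ 2

lemma zero_mem_DD : (0:ℂ) ∈ DD := by simp

lemma HP.nonneg {α : ℝ} {f : ℂ → ℂ} {B : ℝ} (h : HP α f B) : 0 ≤ B :=
  (norm_nonneg _).trans (h.1 0 zero_mem_DD)

lemma HP.cont {α : ℝ} (hα : 0 < α) {f : ℂ → ℂ} {B : ℝ} (h : HP α f B) : ContinuousOn f DD := by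
  have : HolderOnWith B.toNNReal α.toNNReal f DD := by
    intro z hz w hw
    have := h.2 z hz w hw
    rw [edist_eq_enorm_sub, edist_eq_enorm_sub, ← ofReal_norm, ← ofReal_norm, Real.coe_toNNReal α hα.le,
      ENNReal.ofReal_rpow_of_nonneg (norm_nonneg _) hα.le]
    change _ ≤ ENNReal.ofReal B * _
    rw [← ENNReal.ofReal_mul h.nonneg]
    exact ENNReal.ofReal_le_ofReal this
  exact this.continuousOn (by simpa using hα)

lemma ae_ne (z : ℂ) : ∀ᵐ ζ ∂(volume.restrict DD), ζ ≠ z :=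
  ae_restrict_of_ae (measure_eq_zero_iff_ae_notMem.1 (measure_singleton z))

lemma T_int {f : ℂ → ℂ} {B : ℝ} (hm : AEStronglyMeasurable f (volume.restrict DD))
    (hB : ∀ z ∈ DD, ‖f z‖ ≤ B) {z : ℂ} (hz : z ∈ DD) :
    IntegrableOn (fun ζ => f ζ / (ζ - z)) DD := by
  simp_rw [div_eq_mul_inv]
  exact (inv_intOn z hz).bdd_mul hm ((ae_restrict_mem measurableSet_closedBall).mono hB)

lemma T_bound : ∃ C : ℝ, 0 ≤ C ∧ ∀ (f : ℂ → ℂ) (B : ℝ), (∀ z ∈ DD, ‖f z‖ ≤ B) →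
    ∀ z ∈ DD, ‖Tcg 1 f z‖ ≤ C * B := by
  obtain ⟨C, C0, hC⟩ := single_kernel (-1) (by norm_num)
  refine ⟨Real.pi⁻¹ * C, by positivity, fun f B hB z hz => ?_⟩
  obtain ⟨h1, h2⟩ := hC z hz
  have B0 : 0 ≤ B := (norm_nonneg _).trans (hB 0 zero_mem_DD)
  unfold Tcg
  rw [norm_mul, norm_neg, norm_inv, norm_real, Real.norm_of_nonneg Real.pi_pos.le, mul_assoc]
  gcongr
  refine (norm_integral_le_of_norm_le (h1.const_mul B) ?_).trans ?_
  · filter_upwards [ae_restrict_mem measurableSet_closedBall] with ζ hζ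
    rw [norm_div, Real.rpow_neg_one, div_eq_mul_inv]
    gcongr
    exact hB ζ hζ
  · rw [integral_const_mul, mul_comm]
    gcongr

lemma Pi_pt {α : ℝ} {f : ℂ → ℂ} {B : ℝ} (h : HP α f B) {z ζ : ℂ} (hz : z ∈ DD) (hζ : ζ ∈ DD)
    (hne : ζ ≠ z) : ‖(f ζ - f z) / (ζ - z) ^ 2‖ ≤ B * ‖ζ - z‖ ^ (α - 2) := by
  have hp : 0 < ‖ζ - z‖ := norm_pos_iff.2 (sub_ne_zero.2 hne)
  rw [norm_div, norm_pow, Real.rpow_sub hp, Real.rpow_two, mul_div_assoc']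
  gcongr
  exact h.2 ζ hζ z hz

lemma Pi_int {α : ℝ} (hα : 0 < α) {f : ℂ → ℂ} {B : ℝ} (h : HP α f B)
    {z : ℂ} (hz : z ∈ DD) : IntegrableOn (fun ζ => (f ζ - f z) / (ζ - z) ^ 2) DD := by
  obtain ⟨C, _, hC⟩ := single_kernel (α - 2) (by linarith)
  refine Integrable.mono' ((hC z hz).1.const_mul B) ?_ ?_
  · have := (h.cont hα).aestronglyMeasurable (μ := volume) measurableSet_closedBall
    refine (this.sub aestronglyMeasurable_const).mul (f := fun ζ => f ζ - f z)
      (g := fun ζ => ((ζ - z)^2)⁻¹) (by fun_prop)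
  · filter_upwards [ae_restrict_mem measurableSet_closedBall, ae_ne z] with ζ hζ hne
    exact Pi_pt h hz hζ hne

lemma Pi_bound (α : ℝ) (hα : 0 < α) : ∃ C : ℝ, 0 ≤ C ∧ ∀ (f : ℂ → ℂ) (B : ℝ), HP α f B →
    ∀ z ∈ DD, ‖PiOp f z‖ ≤ C * B := by
  obtain ⟨C, C0, hC⟩ := single_kernel (α - 2) (by linarith)
  refine ⟨Real.pi⁻¹ * C, by positivity, fun f B hB z hz => ?_⟩
  obtain ⟨h1, h2⟩ := hC z hz
  have B0 : 0 ≤ B := hB.nonneg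
  unfold PiOp
  rw [norm_mul, norm_neg, norm_inv, norm_real, Real.norm_of_nonneg Real.pi_pos.le, mul_assoc]
  gcongr
  refine (norm_integral_le_of_norm_le (h1.const_mul B) ?_).trans ?_
  · filter_upwards [ae_restrict_mem measurableSet_closedBall, ae_ne z] with ζ hζ hne
    exact Pi_pt hB hz hζ hne
  · rw [integral_const_mul, mul_comm]
    gcongr

lemma HP.meas {α : ℝ} (hα : 0 < α) {f : ℂ → ℂ} {B : ℝ} (h : HP α f B) :
    AEStronglyMeasurable f (volume.restrict DD) :=
  (h.cont hα).aestronglyMeasurable measurableSet_closedBall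

/-- first order Taylor expansion of `T f`, uniformly on the closed disk -/
lemma taylorT (α : ℝ) (hα : α ∈ Set.Ioo (0:ℝ) 1) : ∃ C : ℝ, 0 ≤ C ∧ ∀ (f : ℂ → ℂ) (B : ℝ), HP α f B →
    ∀ z ∈ DD, ∀ a ∈ DD, ‖Tcg 1 f z - Tcg 1 f a - f a * ((starRingEnd ℂ) z - (starRingEnd ℂ) a)
      - PiOp f a * (z - a)‖ ≤ C * B * ‖z - a‖ ^ (1 + α) := by
  obtain ⟨C, C0, hC⟩ := kernel_bound α hα
  refine ⟨Real.pi⁻¹ * C, by positivity, fun f B hB z hz a ha => ?_⟩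
  have B0 : 0 ≤ B := hB.nonneg
  rcases eq_or_ne z a with rfl | hza
  · simp only [sub_self, mul_zero, norm_zero]; positivity
  have hp : 0 < ‖z - a‖ := norm_pos_iff.2 (sub_ne_zero.2 hza)
  obtain ⟨G, hGi, hG, hGb⟩ := hC a z hza.symm
  have hpi : (Real.pi : ℂ) ≠ 0 := by simp [Real.pi_ne_zero]
  have i1 : IntegrableOn (fun ζ => f ζ / (ζ - z)) DD := T_int (hB.meas hα.1) hB.1 hz
  have i2 : IntegrableOn (fun ζ => f ζ / (ζ - a)) DD := T_int (hB.meas hα.1) hB.1 ha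
  have i3 : IntegrableOn (fun ζ => f a * (ζ - z)⁻¹) DD := (inv_intOn z hz).const_mul _
  have i4 : IntegrableOn (fun ζ => f a * (ζ - a)⁻¹) DD := (inv_intOn a ha).const_mul _
  have i5 : IntegrableOn (fun ζ => (f ζ - f a) / (ζ - a) ^ 2 * (z - a)) DD :=
    (Pi_int hα.1 hB ha).mul_const _
  have eq : Tcg 1 f z - Tcg 1 f a - f a * ((starRingEnd ℂ) z - (starRingEnd ℂ) a)
      - PiOp f a * (z - a) = -(Real.pi : ℂ)⁻¹ * ∫ ζ in DD,
        (((f ζ / (ζ - z) - f ζ / (ζ - a)) - (f a * (ζ - z)⁻¹ - f a * (ζ - a)⁻¹)) -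
          (f ζ - f a) / (ζ - a) ^ 2 * (z - a)) := by
    have j1 := i1.sub i2
    have j2 := i3.sub i4
    have j3 := j1.sub j2
    rw [integral_sub (by exact j3) (by exact i5), integral_sub (by exact j1) (by exact j2),
      integral_sub i1 i2, integral_sub i3 i4, integral_const_mul, integral_const_mul,
      integral_mul_const, T_one z hz, T_one a ha]
    unfold Tcg PiOp
    field_simp
    ring
  rw [eq, norm_mul, norm_neg, norm_inv, norm_real, Real.norm_of_nonneg Real.pi_pos.le, mul_assoc,
    mul_assoc]
  gcongr
  refine (norm_integral_le_of_norm_le ((hGi.integrableOn (s := DD)).const_mul (B * ‖z - a‖ ^ 2)) ?_).trans ?_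
  · filter_upwards [ae_restrict_mem measurableSet_closedBall, ae_ne z, ae_ne a] with ζ hζ hne hne'
    have e1 : ((f ζ / (ζ - z) - f ζ / (ζ - a)) - (f a * (ζ - z)⁻¹ - f a * (ζ - a)⁻¹)) -
          (f ζ - f a) / (ζ - a) ^ 2 * (z - a) =
          (f ζ - f a) / (ζ - a) ^ 2 * ((z - a) ^ 2 * (ζ - z)⁻¹) := by
      have := sub_ne_zero.2 hne
      have := sub_ne_zero.2 hne'
      field_simp
      ring
    rw [e1, norm_mul, norm_mul, norm_pow, norm_inv]
    calc ‖(f ζ - f a) / (ζ - a) ^ 2‖ * (‖z - a‖ ^ 2 * ‖ζ - z‖⁻¹)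
        ≤ (B * ‖ζ - a‖ ^ (α - 2)) * (‖z - a‖ ^ 2 * ‖ζ - z‖⁻¹) := by
          gcongr
          exact Pi_pt hB ha hζ hne'
      _ = (B * ‖z - a‖ ^ 2) * (‖ζ - a‖ ^ (α - 2) * ‖ζ - z‖⁻¹) := by ring
      _ ≤ _ := by
          gcongr
          exact hG ζ
  · rw [integral_const_mul]
    calc B * ‖z - a‖ ^ 2 * ∫ ζ in DD, G ζ ≤ B * ‖z - a‖ ^ 2 * (C * ‖a - z‖ ^ (α - 1)) := by
          gcongr
      _ = _ := by
          rw [norm_sub_rev a z, show 1 + α = 2 + (α - 1) by ring, Real.rpow_add hp, Real.rpow_two]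
          ring

/-- real linear map `v ↦ p v + q v̄` -/
noncomputable def WW (p q : ℂ) : ℂ →L[ℝ] ℂ :=
  p • ContinuousLinearMap.id ℝ ℂ + q • (conjCLE : ℂ →L[ℝ] ℂ)

@[simp] lemma WW_apply (p q v : ℂ) : WW p q v = p * v + q * (starRingEnd ℂ) v := by
  simp [WW]

lemma Pi_holder (α : ℝ) (hα : α ∈ Set.Ioo (0:ℝ) 1) : ∃ C : ℝ, 0 ≤ C ∧ ∀ (f : ℂ → ℂ) (B : ℝ),
    HP α f B → HP α (PiOp f) (C * B) := by
  obtain ⟨C1, p1, h1⟩ := Pi_bound α hα.1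
  obtain ⟨C2, p2, h2⟩ := taylorT α hα
  refine ⟨C1 + 1 + 2 * C2, by positivity, fun f B hB => ?_⟩
  have B0 := hB.nonneg
  refine ⟨fun z hz => (h1 f B hB z hz).trans (by nlinarith [mul_nonneg p2 B0]), fun z hz w hw => ?_⟩
  rcases eq_or_ne z w with rfl | hza
  · simp only [sub_self, norm_zero]; positivity
  have hp : 0 < ‖z - w‖ := norm_pos_iff.2 (sub_ne_zero.2 hza)
  have e1 := h2 f B hB z hz w hw
  have e2 := h2 f B hB w hw z hz
  have e3 := hB.2 z hz w hw
  rw [norm_sub_rev w z] at e2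
  set X := Tcg 1 f z - Tcg 1 f w - f w * ((starRingEnd ℂ) z - (starRingEnd ℂ) w) - PiOp f w * (z - w)
  set Y := Tcg 1 f w - Tcg 1 f z - f z * ((starRingEnd ℂ) w - (starRingEnd ℂ) z) - PiOp f z * (w - z)
  have e4 : (PiOp f z - PiOp f w) * (z - w) = X + Y - (f z - f w) * (starRingEnd ℂ) (z - w) := by
    simp only [X, Y, map_sub]; ring
  have e5 : ‖PiOp f z - PiOp f w‖ * ‖z - w‖ ≤
      (C2 * B * ‖z - w‖ ^ (1 + α) + C2 * B * ‖z - w‖ ^ (1 + α)) + (B * ‖z - w‖ ^ α) * ‖z - w‖ := by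
    rw [← norm_mul, e4]
    refine (norm_sub_le _ _).trans (add_le_add ((norm_add_le _ _).trans (add_le_add e1 e2)) ?_)
    rw [norm_mul, RCLike.norm_conj]
    gcongr
  rw [Real.rpow_add hp, Real.rpow_one] at e5
  refine le_of_mul_le_mul_right (e5.trans ?_) hp
  have : 0 ≤ C1 * B * ‖z - w‖ ^ α * ‖z - w‖ := by positivity
  nlinarith

lemma T_hasFDeriv (α : ℝ) (hα : α ∈ Set.Ioo (0:ℝ) 1) {f : ℂ → ℂ} {B : ℝ} (hB : HP α f B) {a : ℂ}
    (ha : a ∈ UU) : HasFDerivAt (Tcg 1 f) (WW (PiOp f a) (f a)) a := by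
  obtain ⟨C2, p2, h2⟩ := taylorT α hα
  rw [hasFDerivAt_iff_isLittleO]
  have hO : (fun z => Tcg 1 f z - Tcg 1 f a - WW (PiOp f a) (f a) (z - a)) =O[nhds a]
      fun z => ‖z - a‖ ^ (1 + α) := by
    refine Asymptotics.IsBigO.of_bound (C2 * B) ?_
    filter_upwards [isOpen_ball.mem_nhds ha] with z hz
    have := h2 f B hB z (ball_subset_closedBall hz) a (ball_subset_closedBall ha)
    rw [Real.norm_of_nonneg (by positivity)]
    convert this using 2
    simp only [WW_apply, map_sub]; ring
  refine hO.trans_isLittleO ?_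
  have : (fun z : ℂ => ‖z - a‖ ^ (1 + α)) = fun z => ‖z - a‖ * ‖z - a‖ ^ α := by
    funext z
    rcases eq_or_lt_of_le (norm_nonneg (z - a)) with h | h
    · rw [← h, Real.zero_rpow (by linarith [hα.1])]; simp
    · rw [Real.rpow_add h, Real.rpow_one]
  rw [this]
  have ht : Filter.Tendsto (fun z : ℂ => ‖z - a‖ ^ α) (nhds a) (nhds 0) := by
    have : Continuous fun z : ℂ => ‖z - a‖ ^ α := by
      apply Continuous.rpow_const (by fun_prop); intro; right; exact hα.1.le
    have := this.tendsto a
    simpa [Real.zero_rpow hα.1.ne'] using this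
  have h3 := (Asymptotics.isBigO_refl (fun z : ℂ => ‖z - a‖) (nhds a)).mul_isLittleO
    ((Asymptotics.isLittleO_one_iff ℝ).2 ht)
  simpa using h3


/-- `f` is C¹ on the open disk with derivatives `p = ∂f`, `q = ∂̄f` continuous up to the boundary -/
def C1 (f p q : ℂ → ℂ) : Prop :=
  ContinuousOn f DD ∧ ContinuousOn p DD ∧ ContinuousOn q DD ∧
    ∀ z ∈ UU, HasFDerivAt f (WW (p z) (q z)) z

lemma WW_norm (p q : ℂ) : ‖WW p q‖ ≤ ‖p‖ + ‖q‖ := by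
  refine ContinuousLinearMap.opNorm_le_bound _ (by positivity) fun v => ?_
  rw [WW_apply, add_mul]
  refine (norm_add_le _ _).trans ?_
  simp

lemma lip_DD {f p q : ℂ → ℂ} {B : ℝ} (hf : ContinuousOn f DD) (hp : ∀ z ∈ UU, ‖p z‖ ≤ B)
    (hq : ∀ z ∈ UU, ‖q z‖ ≤ B) (h : ∀ z ∈ UU, HasFDerivAt f (WW (p z) (q z)) z) :
    LipschitzOnWith (2 * B).toNNReal f DD := by
  have h1 : LipschitzOnWith (2 * B).toNNReal f UU := by
    refine (convex_ball (0:ℂ) 1).lipschitzOnWith_of_nnnorm_hasFDerivWithin_le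
      (fun z hz => (h z hz).hasFDerivWithinAt) (fun z hz => ?_)
    rw [← NNReal.coe_le_coe, coe_nnnorm]
    exact ((WW_norm _ _).trans (by linarith [hp z hz, hq z hz])).trans (Real.le_coe_toNNReal _)
  have := h1.closure (by rw [closure_ball _ (by norm_num)]; exact hf)
  rwa [closure_ball _ (by norm_num)] at this

lemma bdd_DD {f : ℂ → ℂ} (hf : ContinuousOn f DD) : ∃ B, ∀ z ∈ DD, ‖f z‖ ≤ B :=
  (isCompact_closedBall (0:ℂ) 1).exists_bound_of_continuousOn hf

lemma C1.lip {f p q : ℂ → ℂ} (h : C1 f p q) : ∃ L : ℝ≥0, LipschitzOnWith L f DD := by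
  obtain ⟨B1, h1⟩ := bdd_DD h.2.1
  obtain ⟨B2, h2⟩ := bdd_DD h.2.2.1
  exact ⟨_, lip_DD (B := max B1 B2) h.1 (fun z hz => (h1 z (ball_subset_closedBall hz)).trans (le_max_left _ _))
    (fun z hz => (h2 z (ball_subset_closedBall hz)).trans (le_max_right _ _)) h.2.2.2⟩

lemma dist_le_rpow {α : ℝ} (hα : α ∈ Set.Ioo (0:ℝ) 1) {z w : ℂ} (hz : z ∈ DD) (hw : w ∈ DD) :
    ‖z - w‖ ≤ 2 * ‖z - w‖ ^ α := by
  have h2 : ‖z - w‖ ≤ 2 := by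
    have := norm_sub_le z w
    simp only [mem_closedBall_zero_iff] at hz hw
    linarith
  rcases eq_or_lt_of_le (norm_nonneg (z - w)) with h | h
  · rw [← h]; positivity
  calc ‖z - w‖ = ‖z - w‖ ^ (1 - α) * ‖z - w‖ ^ α := by
        rw [← Real.rpow_add h]; simp
    _ ≤ 2 ^ (1 - α) * ‖z - w‖ ^ α := by
        gcongr; linarith [hα.2]
    _ ≤ 2 ^ (1:ℝ) * ‖z - w‖ ^ α := by
        gcongr
        · norm_num
        · linarith [hα.1]
    _ = _ := by rw [Real.rpow_one]

lemma C1.hp {α : ℝ} (hα : α ∈ Set.Ioo (0:ℝ) 1) {f p q : ℂ → ℂ} (h : C1 f p q) : ∃ B, HP α f B := by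
  obtain ⟨L, hL⟩ := h.lip
  obtain ⟨B, hB⟩ := bdd_DD h.1
  refine ⟨max B (L * 2), fun z hz => (hB z hz).trans (le_max_left _ _), fun z hz w hw => ?_⟩
  have := hL.dist_le_mul z hz w hw
  rw [dist_eq_norm, dist_eq_norm] at this
  refine this.trans ?_
  calc (L:ℝ) * ‖z - w‖ ≤ L * (2 * ‖z - w‖ ^ α) := by gcongr; exact dist_le_rpow hα hz hw
    _ = (L * 2) * ‖z - w‖ ^ α := by ring
    _ ≤ _ := by gcongr; exact le_max_right _ _

lemma C1.mul {f p q g p' q' : ℂ → ℂ} (h : C1 f p q) (h' : C1 g p' q') :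
    C1 (fun z => f z * g z) (fun z => p z * g z + f z * p' z) (fun z => q z * g z + f z * q' z) := by
  obtain ⟨a, b, c, d⟩ := h
  obtain ⟨a', b', c', d'⟩ := h'
  refine ⟨a.mul a', (b.mul a').add (a.mul b'), (c.mul a').add (a.mul c'), fun z hz => ?_⟩
  refine ((d z hz).mul (d' z hz)).congr_fderiv (ContinuousLinearMap.ext fun v => ?_)
  simp only [add_apply, smul_apply, WW_apply, smul_eq_mul]
  ring

lemma C1.conj_id : C1 (fun z => (starRingEnd ℂ) z) (fun _ => 0) (fun _ => 1) := by
  refine ⟨by fun_prop, by fun_prop, by fun_prop, fun z hz => ?_⟩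
  refine (conjCLE : ℂ →L[ℝ] ℂ).hasFDerivAt.congr_fderiv (ContinuousLinearMap.ext fun v => ?_)
  simp

lemma C1.id : C1 (fun z => z) (fun _ => 1) (fun _ => 0) := by
  refine ⟨by fun_prop, by fun_prop, by fun_prop, fun z hz => ?_⟩
  refine (hasFDerivAt_id (𝕜 := ℝ) z).congr_fderiv (ContinuousLinearMap.ext fun v => ?_)
  simp

lemma C1.one_sub {f p q : ℂ → ℂ} (h : C1 f p q) : C1 (fun z => 1 - f z) (fun z => - p z) (fun z => - q z) := by
  obtain ⟨a, b, c, d⟩ := h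
  refine ⟨by fun_prop, by fun_prop, by fun_prop, fun z hz => ?_⟩
  refine ((d z hz).const_sub 1).congr_fderiv (ContinuousLinearMap.ext fun v => ?_)
  simp only [neg_apply, WW_apply]
  ring

lemma ae_UU : ∀ᵐ ζ ∂(volume.restrict DD), ζ ∈ UU := by
  have hs : volume (sphere (0:ℂ) 1) = 0 := Measure.addHaar_sphere _ _ _
  have : ∀ᵐ ζ ∂(volume.restrict DD), ζ ∉ sphere (0:ℂ) 1 :=
    ae_restrict_of_ae (measure_eq_zero_iff_ae_notMem.1 hs)
  filter_upwards [this, ae_restrict_mem measurableSet_closedBall] with ζ h1 h2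
  simp only [mem_sphere_iff_norm, sub_zero, mem_closedBall_zero_iff, mem_ball_zero_iff] at *
  exact lt_of_le_of_ne h2 h1

lemma T_intC {f : ℂ → ℂ} (hf : ContinuousOn f DD) {z : ℂ} (hz : z ∈ DD) :
    IntegrableOn (fun ζ => f ζ / (ζ - z)) DD := by
  obtain ⟨B, hB⟩ := bdd_DD hf
  exact T_int (hf.aestronglyMeasurable measurableSet_closedBall) hB hz

/-- rotation commutes with `T` up to a factor -/
lemma T_rot (g : ℂ → ℂ) (z : ℂ) (t : ℝ) :
    Tcg 1 (fun ζ => g (exp (t * I) * ζ)) z = exp (t * I) * Tcg 1 g (exp (t * I) * z) := by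
  unfold Tcg
  rw [← rot_int t (fun ζ => g ζ / (ζ - exp (t * I) * z)), mul_left_comm, ← integral_const_mul (exp (t * I))]
  congr 2
  funext ζ
  have := Complex.exp_ne_zero (t * I)
  rw [← mul_sub, mul_div_assoc', mul_div_mul_left _ _ this]

lemma exp_hd (ζ : ℂ) : HasDerivAt (fun t : ℝ => exp (t * I) * ζ) (I * ζ) 0 := by
  have h1 : HasDerivAt (fun t : ℝ => (t : ℂ) * I) I 0 := by
    simpa using (Complex.ofRealCLM.hasDerivAt (x := 0)).mul_const I
  have := (h1.cexp).mul_const ζ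
  simpa using this

lemma exp_lip (t s : ℝ) : ‖exp (t * I) - exp (s * I)‖ ≤ |t - s| := by
  have h : exp (t * I) - exp (s * I) = exp (s * I) * (exp (I * (t - s : ℝ)) - 1) := by
    rw [mul_sub, ← Complex.exp_add]; push_cast; ring_nf
  rw [h, norm_mul, Complex.norm_exp_ofReal_mul_I, one_mul]
  exact Real.norm_exp_I_mul_ofReal_sub_one_le

lemma rotId {α : ℝ} (hα : α ∈ Set.Ioo (0:ℝ) 1) {g p q : ℂ → ℂ} (h : C1 g p q) {z : ℂ} (hz : z ∈ UU) :
    z * PiOp g z = Tcg 1 (fun ζ => ζ * p ζ - (starRingEnd ℂ) ζ * q ζ) z - Tcg 1 g z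
      + (starRingEnd ℂ) z * g z := by
  obtain ⟨B, hB⟩ := h.hp hα
  obtain ⟨L, hL⟩ := h.lip
  have hz' := ball_subset_closedBall hz
  have rotmem : ∀ (t : ℝ) (ζ : ℂ), ζ ∈ DD → exp (t * I) * ζ ∈ DD := by
    intro t ζ hζ
    simpa [Complex.norm_exp_ofReal_mul_I] using hζ
  have hc : ContinuousOn (fun ζ => ζ * p ζ - (starRingEnd ℂ) ζ * q ζ) DD := by
    have := h.2.1; have := h.2.2.1; fun_prop
  -- left side
  have left := (hasDerivAt_integral_of_dominated_loc_of_lip (μ := volume.restrict DD) (s := Set.univ)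
    (F := fun (t : ℝ) ζ => g (exp (t * I) * ζ) / (ζ - z)) (x₀ := 0)
    (F' := fun ζ => I * (ζ * p ζ - (starRingEnd ℂ) ζ * q ζ) / (ζ - z))
    (bound := fun ζ => (L : ℝ) * ‖(ζ - z)⁻¹‖) Filter.univ_mem ?_ ?_ ?_ ?_ ?_ ?_).2
  rotate_left
  · refine Filter.Eventually.of_forall fun t => ?_
    refine (T_intC (f := fun ζ => g (exp (t * I) * ζ)) ?_ hz').aestronglyMeasurable
    exact h.1.comp (by fun_prop) (rotmem t)
  · refine (T_intC (f := fun ζ => g (exp ((0:ℝ) * I) * ζ)) ?_ hz')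
    exact h.1.comp (by fun_prop) (rotmem 0)
  · exact (T_intC (f := fun ζ => I * (ζ * p ζ - (starRingEnd ℂ) ζ * q ζ)) (by fun_prop) hz').aestronglyMeasurable
  · filter_upwards [ae_restrict_mem measurableSet_closedBall] with ζ hζ
    refine LipschitzOnWith.of_dist_le_mul fun t _ s _ => ?_
    have h1 := hL.dist_le_mul _ (rotmem t ζ hζ) _ (rotmem s ζ hζ)
    rw [dist_eq_norm, dist_eq_norm, ← sub_mul, norm_mul] at h1
    have hn : ‖ζ‖ ≤ 1 := by simpa using hζ
    rw [dist_eq_norm, ← _root_.sub_div, norm_div, div_eq_mul_inv, ← norm_inv, Real.coe_nnabs,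
      abs_of_nonneg (by positivity), Real.dist_eq, mul_right_comm]
    gcongr
    refine h1.trans ?_
    gcongr
    calc _ ≤ |t - s| * 1 := by gcongr; exact exp_lip t s
      _ = _ := mul_one _
  · exact ((inv_intOn z hz').norm.const_mul _)
  · filter_upwards [ae_UU] with ζ hζ
    have h1 : HasFDerivAt g (WW (p ζ) (q ζ)) (exp ((0:ℝ) * I) * ζ) := by
      simpa using h.2.2.2 ζ hζ
    have h2 := (h1.comp_hasDerivAt (0:ℝ) (exp_hd ζ)).div_const (ζ - z)
    refine HasDerivAt.congr_deriv h2 ?_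
    simp only [WW_apply, map_mul, conj_I]; ring
  -- right side
  have hT : HasFDerivAt (Tcg 1 g) (WW (PiOp g z) (g z)) (exp ((0:ℝ) * I) * z) := by
    simpa using T_hasFDeriv α hα hB hz
  have r1 := hT.comp_hasDerivAt (0:ℝ) (exp_hd z)
  have r2 := exp_hd 1
  simp only [mul_one] at r2
  have right := r2.mul r1
  have left' := left.const_mul (-(Real.pi : ℂ)⁻¹)
  have e := left'.unique (right.congr_of_eventuallyEq (Filter.Eventually.of_forall fun t => T_rot g z t))
  have e2 : -(Real.pi : ℂ)⁻¹ * ∫ ζ in DD, I * (ζ * p ζ - (starRingEnd ℂ) ζ * q ζ) / (ζ - z) =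
      I * Tcg 1 (fun ζ => ζ * p ζ - (starRingEnd ℂ) ζ * q ζ) z := by
    unfold Tcg
    rw [mul_left_comm, ← integral_const_mul I]
    congr 2; funext ζ; ring
  rw [e2] at e
  apply mul_left_cancel₀ I_ne_zero
  simp only [Function.comp, WW_apply, map_mul, conj_I, Complex.ofReal_zero, zero_mul, exp_zero, one_mul] at e
  linear_combination -e


lemma ext_lip {H : ℂ → ℂ} {L : ℝ≥0} (hL : LipschitzOnWith L H DD) (h0 : ∀ z, ‖z‖ = 1 → H z = 0)
    (z w : ℂ) : ‖DD.indicator H z - DD.indicator H w‖ ≤ L * ‖z - w‖ := by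
  have key : ∀ z w : ℂ, z ∈ DD → w ∉ DD → ‖H z‖ ≤ L * ‖z - w‖ := by
    intro z w hz hw
    obtain ⟨s, hs, hzs⟩ : ∃ s : ℂ, ‖s‖ = 1 ∧ ‖z - s‖ = 1 - ‖z‖ := by
      rcases eq_or_ne z 0 with rfl | hz0
      · exact ⟨1, by simp, by simp⟩
      · have hzn : ‖z‖ ≠ 0 := norm_ne_zero_iff.2 hz0
        refine ⟨(‖z‖⁻¹ : ℝ) • z, by rw [norm_smul, norm_inv, norm_norm, inv_mul_cancel₀ hzn], ?_⟩
        have hz1 : ‖z‖ ≤ 1 := by simpa using hz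
        have hp : 0 < ‖z‖ := lt_of_le_of_ne (norm_nonneg _) hzn.symm
        have : z - (‖z‖⁻¹ : ℝ) • z = (1 - ‖z‖⁻¹ : ℝ) • z := by rw [sub_smul, one_smul]
        have h1 : 1 ≤ ‖z‖⁻¹ := (one_le_inv₀ hp).2 hz1
        rw [this, norm_smul, Real.norm_eq_abs, abs_of_nonpos (by linarith)]
        field_simp
        ring
    have h1 := hL.dist_le_mul z hz s (by simp [hs])
    rw [dist_eq_norm, dist_eq_norm, h0 s hs, sub_zero, hzs] at h1
    refine h1.trans ?_
    gcongr
    have : 1 < ‖w‖ := by simpa using hw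
    have := norm_sub_norm_le w z
    rw [norm_sub_rev w z] at this
    linarith
  by_cases hz : z ∈ DD <;> by_cases hw : w ∈ DD
  · rw [Set.indicator_of_mem hz, Set.indicator_of_mem hw]
    have := hL.dist_le_mul z hz w hw
    rwa [dist_eq_norm, dist_eq_norm] at this
  · rw [Set.indicator_of_mem hz, Set.indicator_of_notMem hw, sub_zero]
    exact key z w hz hw
  · rw [Set.indicator_of_notMem hz, Set.indicator_of_mem hw, zero_sub, norm_neg, norm_sub_rev]
    exact key w z hw hz
  · rw [Set.indicator_of_notMem hz, Set.indicator_of_notMem hw, sub_zero, norm_zero]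
    positivity

lemma shift_int (f : ℂ → ℂ) (z : ℂ) (hf : IntegrableOn (fun ζ => f ζ / (ζ - z)) DD) :
    Integrable (fun w => DD.indicator f (w + z) / w) := by
  have := (hf.integrable_indicator measurableSet_closedBall).comp_add_right z
  refine this.congr (Filter.Eventually.of_forall fun w => ?_)
  simp only [Set.indicator]
  split_ifs <;> simp

lemma shift_eq (f : ℂ → ℂ) (z : ℂ) :
    ∫ w, DD.indicator f (w + z) / w = ∫ ζ in DD, f ζ / (ζ - z) := by
  rw [← integral_indicator measurableSet_closedBall,
    ← integral_add_right_eq_self (DD.indicator fun ζ => f ζ / (ζ - z)) z]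
  congr 1
  funext w
  simp only [Set.indicator]
  split_ifs <;> simp

lemma vanDir {α : ℝ} (hα : α ∈ Set.Ioo (0:ℝ) 1) {H p q : ℂ → ℂ} (h : C1 H p q)
    (h0 : ∀ z, ‖z‖ = 1 → H z = 0) {z : ℂ} (hz : z ∈ UU) (v : ℂ) (hv : ‖v‖ = 1) :
    PiOp H z * v + H z * (starRingEnd ℂ) v = Tcg 1 p z * v + Tcg 1 q z * (starRingEnd ℂ) v := by
  obtain ⟨B, hB⟩ := h.hp hα
  obtain ⟨L, hL⟩ := h.lip
  have hz' := ball_subset_closedBall hz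
  have ip := T_intC h.2.1 hz'
  have iq := T_intC h.2.2.1 hz'
  have hc : ContinuousOn (fun ζ => p ζ * v + q ζ * (starRingEnd ℂ) v) DD := by
    have := h.2.1; have := h.2.2.1; fun_prop
  have hn : ‖z‖ < 1 := by simpa using hz
  have left := (hasDerivAt_integral_of_dominated_loc_of_lip (μ := (volume : Measure ℂ)) (s := ball (0:ℝ) 1)
    (F := fun (t : ℝ) w => DD.indicator H (w + (z + t * v)) / w) (x₀ := 0)
    (F' := fun w => DD.indicator (fun ζ => p ζ * v + q ζ * (starRingEnd ℂ) v) (w + z) / w)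
    (bound := fun w => (L : ℝ) * (ball (0:ℂ) 3).indicator (fun w => ‖w‖ ^ (-1 : ℝ)) w)
    (ball_mem_nhds _ one_pos) ?_ ?_ ?_ ?_ ?_ ?_).2
  rotate_left
  · have ev : ∀ᶠ t : ℝ in nhds 0, z + t * v ∈ UU := by
      have : ContinuousAt (fun t : ℝ => z + t * v) 0 := by fun_prop
      exact this.eventually_mem (isOpen_ball.mem_nhds (by simpa using hz))
    filter_upwards [ev] with t ht
    exact (shift_int H _ (T_intC h.1 (ball_subset_closedBall ht))).aestronglyMeasurable
  · have := shift_int H _ (T_intC h.1 hz')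
    simpa using this
  · exact (shift_int _ _ (T_intC hc hz')).aestronglyMeasurable
  · refine Filter.Eventually.of_forall fun w => ?_
    refine LipschitzOnWith.of_dist_le_mul fun t ht s hs => ?_
    simp only [mem_ball_zero_iff, Real.norm_eq_abs] at ht hs
    rw [dist_eq_norm, ← _root_.sub_div, norm_div, div_eq_mul_inv, Real.coe_nnabs]
    by_cases hw : w ∈ ball (0:ℂ) 3
    · rw [Set.indicator_of_mem hw, abs_of_nonneg (by positivity), Real.rpow_neg_one, mul_right_comm]
      gcongr
      refine (ext_lip hL h0 _ _).trans ?_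
      rw [show w + (z + t * v) - (w + (z + s * v)) = ((t - s : ℝ) : ℂ) * v by push_cast; ring, norm_mul, hv,
        mul_one, norm_real, Real.dist_eq, Real.norm_eq_abs]
    · have hw3 : 3 ≤ ‖w‖ := by simpa using hw
      have out : ∀ t : ℝ, |t| < 1 → w + (z + t * v) ∉ DD := by
        intro t ht hmem
        have h1 : ‖w + (z + t * v)‖ ≤ 1 := by simpa using hmem
        have h2 : ‖w‖ ≤ ‖w + (z + t * v)‖ + ‖z + t * v‖ := by
          have := norm_sub_le (w + (z + t * v)) (z + t * v)
          simpa using this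
        have h3 : ‖z + t * v‖ ≤ ‖z‖ + |t| := by
          refine (norm_add_le _ _).trans ?_
          rw [norm_mul, hv, norm_real, mul_one, Real.norm_eq_abs]
        linarith
      rw [Set.indicator_of_notMem (out t ht), Set.indicator_of_notMem (out s hs)]
      simp
      positivity
  · exact ((integrable_indicator_iff measurableSet_ball).2 (intRpow (-1) (by norm_num) 3)).const_mul _
  · have hs : volume (sphere (-z:ℂ) 1) = 0 := Measure.addHaar_sphere _ _ _
    filter_upwards [measure_eq_zero_iff_ae_notMem.1 hs] with w hw
    have hw1 : ‖w + z‖ ≠ 1 := by simpa using hw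
    have hline : HasDerivAt (fun t : ℝ => w + (z + t * v)) v 0 := by
      have h1 : HasDerivAt (fun t : ℝ => (t : ℂ) * v) v 0 := by
        simpa using (Complex.ofRealCLM.hasDerivAt (x := 0)).mul_const v
      exact (h1.const_add z).const_add w
    refine HasDerivAt.div_const ?_ w
    rcases lt_or_gt_of_ne hw1 with hlt | hgt
    · have hmem : w + z ∈ UU := by simpa using hlt
      rw [Set.indicator_of_mem (ball_subset_closedBall hmem)]
      have h1 : HasFDerivAt (DD.indicator H) (WW (p (w + z)) (q (w + z))) (w + (z + (0:ℝ) * v)) := by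
        simp only [Complex.ofReal_zero, zero_mul, add_zero]
        refine (h.2.2.2 _ hmem).congr_of_eventuallyEq ?_
        filter_upwards [isOpen_ball.mem_nhds hmem] with ζ hζ
        rw [Set.indicator_of_mem (ball_subset_closedBall hζ)]
      refine (h1.comp_hasDerivAt (0:ℝ) hline).congr_deriv ?_
      simp
    · have hnm : w + z ∉ DD := by simpa using hgt
      rw [Set.indicator_of_notMem hnm]
      have h1 : HasFDerivAt (DD.indicator H) (0 : ℂ →L[ℝ] ℂ) (w + (z + (0:ℝ) * v)) := by
        simp only [Complex.ofReal_zero, zero_mul, add_zero]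
        refine (hasFDerivAt_const (0:ℂ) _).congr_of_eventuallyEq ?_
        filter_upwards [isClosed_closedBall.isOpen_compl.mem_nhds hnm] with ζ hζ
        rw [Set.indicator_of_notMem hζ]
      refine (h1.comp_hasDerivAt (0:ℝ) hline).congr_deriv ?_
      simp
  have left' := left.const_mul (-(Real.pi : ℂ)⁻¹)
  have hT : HasFDerivAt (Tcg 1 H) (WW (PiOp H z) (H z)) (z + (0:ℝ) * v) := by
    simpa using T_hasFDeriv α hα hB hz
  have hline : HasDerivAt (fun t : ℝ => (z + t * v)) v 0 := by
    have h1 : HasDerivAt (fun t : ℝ => (t : ℂ) * v) v 0 := by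
      simpa using (Complex.ofRealCLM.hasDerivAt (x := 0)).mul_const v
    exact (h1.const_add z)
  have right := hT.comp_hasDerivAt (0:ℝ) hline
  have e := right.unique (left'.congr_of_eventuallyEq (Filter.Eventually.of_forall fun t => by
    simp only [Function.comp, Tcg]
    rw [shift_eq]))
  rw [WW_apply, shift_eq] at e
  rw [e]
  unfold Tcg
  rw [mul_assoc, mul_assoc, ← mul_add, ← integral_mul_const, ← integral_mul_const,
    ← integral_add (ip.mul_const _) (iq.mul_const _)]
  congr 2
  funext ζ
  ring

lemma vanId {α : ℝ} (hα : α ∈ Set.Ioo (0:ℝ) 1) {H p q : ℂ → ℂ} (h : C1 H p q)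
    (h0 : ∀ z, ‖z‖ = 1 → H z = 0) {z : ℂ} (hz : z ∈ UU) : PiOp H z = Tcg 1 p z := by
  have e1 := vanDir hα h h0 hz 1 (by simp)
  have e2 := vanDir hα h h0 hz I (by simp)
  simp only [map_one, conj_I] at e1 e2
  have h2 : (2:ℂ) ≠ 0 := by norm_num
  apply mul_left_cancel₀ h2
  linear_combination e1 - I * e2 + (PiOp H z - H z - Tcg 1 p z + Tcg 1 q z) * I_mul_I

/-- the key commutation formula -/
lemma keyId {α : ℝ} (hα : α ∈ Set.Ioo (0:ℝ) 1) {f p q : ℂ → ℂ} (h : C1 f p q) {z : ℂ} (hz : z ∈ UU) :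
    PiOp f z = Tcg 1 (fun ζ => p ζ - (2 * (starRingEnd ℂ) ζ * f ζ + (starRingEnd ℂ) ζ ^ 2 * q ζ)) z
      + (starRingEnd ℂ) z ^ 2 * f z := by
  have hz' := ball_subset_closedBall hz
  have hG := C1.conj_id.mul h
  have hH := (C1.id.mul C1.conj_id).one_sub.mul h
  obtain ⟨B1, hB1⟩ := hG.hp hα
  obtain ⟨B2, hB2⟩ := hH.hp hα
  have cf := h.1
  have cp := h.2.1
  have cq := h.2.2.1
  have a := rotId hα hG hz
  have b := vanId hα hH (fun z hz => by
    have : z * (starRingEnd ℂ) z = 1 := by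
      rw [Complex.mul_conj, Complex.normSq_eq_norm_sq, hz]; simp
    rw [this]; simp) hz
  have c : PiOp f z = PiOp (fun z => (1 - z * (starRingEnd ℂ) z) * f z) z +
      (z * PiOp (fun z => (starRingEnd ℂ) z * f z) z + Tcg 1 (fun z => (starRingEnd ℂ) z * f z) z) := by
    have i1 := Pi_int hα.1 hB1 hz'
    have i2 := Pi_int hα.1 hB2 hz'
    have i3 := T_intC hG.1 hz'
    unfold PiOp Tcg
    rw [mul_left_comm z, ← mul_add, ← mul_add, ← integral_const_mul z]
    rw [← integral_add (i1.const_mul z) i3, ← integral_add i2 (by exact (i1.const_mul z).add i3)]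
    congr 1
    refine integral_congr_ae ?_
    filter_upwards [ae_ne z] with ζ hne
    have := sub_ne_zero.2 hne
    field_simp
    ring
  rw [c, a, b]
  have d : ∀ F G : ℂ → ℂ, ContinuousOn F DD → ContinuousOn G DD →
      Tcg 1 F z + Tcg 1 G z = Tcg 1 (fun ζ => F ζ + G ζ) z := by
    intro F G hF hG
    unfold Tcg
    rw [← mul_add, ← integral_add (T_intC hF hz') (T_intC hG hz')]
    congr 2; funext ζ; ring
  have e := d (fun z => -(1 * (starRingEnd ℂ) z + z * 0) * f z + (1 - z * (starRingEnd ℂ) z) * p z)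
    (fun ζ => ζ * (0 * f ζ + (starRingEnd ℂ) ζ * p ζ) -
      (starRingEnd ℂ) ζ * (1 * f ζ + (starRingEnd ℂ) ζ * q ζ)) (by fun_prop) (by fun_prop)
  have e' : (fun ζ => p ζ - (2 * (starRingEnd ℂ) ζ * f ζ + (starRingEnd ℂ) ζ ^ 2 * q ζ)) =
      (fun ζ => (-(1 * (starRingEnd ℂ) ζ + ζ * 0) * f ζ + (1 - ζ * (starRingEnd ℂ) ζ) * p ζ) +
       (ζ * (0 * f ζ + (starRingEnd ℂ) ζ * p ζ) -
      (starRingEnd ℂ) ζ * (1 * f ζ + (starRingEnd ℂ) ζ * q ζ))) := by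
    funext ζ; ring
  rw [e', ← e]
  ring


/-- quantitative class `C^{k+α}` on the closed unit disk -/
def PC (α : ℝ) : ℕ → (ℂ → ℂ) → ℝ → Prop
  | 0, f, B => HP α f B
  | k + 1, f, B => (∀ z ∈ DD, ‖f z‖ ≤ B) ∧ ContinuousOn f DD ∧
      ∃ p q : ℂ → ℂ, PC α k p B ∧ PC α k q B ∧ ∀ z ∈ UU, HasFDerivAt f (WW (p z) (q z)) z

lemma HP.mono {α : ℝ} {f : ℂ → ℂ} {A B : ℝ} (h : HP α f A) (hAB : A ≤ B) : HP α f B :=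
  ⟨fun z hz => (h.1 z hz).trans hAB, fun z hz w hw => (h.2 z hz w hw).trans (by gcongr)⟩

lemma PC.mono {α : ℝ} {k : ℕ} : ∀ {f : ℂ → ℂ} {A B : ℝ}, PC α k f A → A ≤ B → PC α k f B := by
  induction k with
  | zero => intro f A B h hAB; exact HP.mono h hAB
  | succ k ih =>
    intro f A B h hAB
    obtain ⟨h1, h2, p, q, hp, hq, h3⟩ := h
    exact ⟨fun z hz => (h1 z hz).trans hAB, h2, p, q, ih hp hAB, ih hq hAB, h3⟩

lemma PC.bd {α : ℝ} {k : ℕ} {f : ℂ → ℂ} {B : ℝ} (h : PC α k f B) : ∀ z ∈ DD, ‖f z‖ ≤ B := by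
  cases k with
  | zero => exact h.1
  | succ k => exact h.1

lemma PC.nonneg {α : ℝ} {k : ℕ} {f : ℂ → ℂ} {B : ℝ} (h : PC α k f B) : 0 ≤ B :=
  (norm_nonneg _).trans (h.bd 0 zero_mem_DD)

lemma PC.cont {α : ℝ} (hα : α ∈ Set.Ioo (0:ℝ) 1) {k : ℕ} {f : ℂ → ℂ} {B : ℝ} (h : PC α k f B) :
    ContinuousOn f DD := by
  cases k with
  | zero => exact HP.cont hα.1 h
  | succ k => exact h.2.1

lemma PC.down {α : ℝ} (hα : α ∈ Set.Ioo (0:ℝ) 1) {k : ℕ} : ∀ {f : ℂ → ℂ} {B : ℝ},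
    PC α (k + 1) f B → PC α k f (4 * B) := by
  induction k with
  | zero =>
    intro f B h
    have hB := h.nonneg
    obtain ⟨h1, h2, p, q, hp, hq, h3⟩ := h
    refine ⟨fun z hz => (h1 z hz).trans (by linarith), fun z hz w hw => ?_⟩
    have hl := lip_DD h2 (fun z hz => hp.bd z (ball_subset_closedBall hz))
      (fun z hz => hq.bd z (ball_subset_closedBall hz)) h3
    have := hl.dist_le_mul z hz w hw
    rw [dist_eq_norm, dist_eq_norm, Real.coe_toNNReal _ (by positivity)] at this
    refine this.trans ?_
    calc 2 * B * ‖z - w‖ ≤ 2 * B * (2 * ‖z - w‖ ^ α) := by gcongr; exact dist_le_rpow hα hz hw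
      _ = _ := by ring
  | succ k ih =>
    intro f B h
    have hB := h.nonneg
    obtain ⟨h1, h2, p, q, hp, hq, h3⟩ := h
    exact ⟨fun z hz => (h1 z hz).trans (by linarith), h2, p, q, ih hp, ih hq, h3⟩

lemma PC.add {α : ℝ} {k : ℕ} : ∀ {f g : ℂ → ℂ} {A B : ℝ}, PC α k f A → PC α k g B →
    PC α k (fun z => f z + g z) (A + B) := by
  induction k with
  | zero =>
    intro f g A B h h'
    refine ⟨fun z hz => (norm_add_le _ _).trans (add_le_add (h.1 z hz) (h'.1 z hz)),
      fun z hz w hw => ?_⟩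
    have e : f z + g z - (f w + g w) = (f z - f w) + (g z - g w) := by ring
    rw [e, add_mul]
    exact (norm_add_le _ _).trans (add_le_add (h.2 z hz w hw) (h'.2 z hz w hw))
  | succ k ih =>
    intro f g A B h h'
    obtain ⟨h1, h2, p, q, hp, hq, h3⟩ := h
    obtain ⟨h1', h2', p', q', hp', hq', h3'⟩ := h'
    refine ⟨fun z hz => (norm_add_le _ _).trans (add_le_add (h1 z hz) (h1' z hz)), h2.add h2',
      _, _, ih hp hp', ih hq hq', fun z hz => ?_⟩
    refine ((h3 z hz).add (h3' z hz)).congr_fderiv (ContinuousLinearMap.ext fun v => ?_)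
    simp only [add_apply, WW_apply]
    ring

lemma PC.conj {α : ℝ} {k : ℕ} : ∀ {f : ℂ → ℂ} {A : ℝ}, PC α k f A →
    PC α k (fun z => (starRingEnd ℂ) (f z)) A := by
  induction k with
  | zero =>
    intro f A h
    refine ⟨fun z hz => by rw [norm_conj]; exact h.1 z hz, fun z hz w hw => ?_⟩
    rw [← map_sub, norm_conj]; exact h.2 z hz w hw
  | succ k ih =>
    intro f A h
    obtain ⟨h1, h2, p, q, hp, hq, h3⟩ := h
    refine ⟨fun z hz => by rw [norm_conj]; exact h1 z hz, continuous_conj.comp_continuousOn h2,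
      _, _, ih hq, ih hp, fun z hz => ?_⟩
    have := (conjCLE : ℂ →L[ℝ] ℂ).hasFDerivAt.comp z (h3 z hz)
    refine this.congr_fderiv (ContinuousLinearMap.ext fun v => ?_)
    simp [add_comm]

lemma PC.const {α : ℝ} (k : ℕ) : ∀ (c : ℂ), PC α k (fun _ => c) ‖c‖ := by
  induction k with
  | zero =>
    intro c
    refine ⟨fun z hz => le_rfl, fun z hz w hw => ?_⟩
    simp; positivity
  | succ k ih =>
    intro c
    refine ⟨fun z hz => le_rfl, continuousOn_const, fun _ => 0, fun _ => 0,
      (ih 0).mono (by simp), (ih 0).mono (by simp), fun z hz => ?_⟩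
    refine (hasFDerivAt_const c z).congr_fderiv (ContinuousLinearMap.ext fun v => ?_)
    simp

lemma PC.id {α : ℝ} (hα : α ∈ Set.Ioo (0:ℝ) 1) (k : ℕ) : PC α k (fun z => z) 4 := by
  have h : PC α (k + 1) (fun z => z) 1 := by
    refine ⟨fun z hz => by simpa using hz, continuousOn_id, fun _ => 1, fun _ => 0,
      (PC.const k 1).mono (by simp), (PC.const k 0).mono (by simp), C1.id.2.2.2⟩
  simpa using h.down hα

lemma PC.mul {α : ℝ} (hα : α ∈ Set.Ioo (0:ℝ) 1) (k : ℕ) : ∃ c : ℝ, 0 ≤ c ∧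
    ∀ (f g : ℂ → ℂ) (A B : ℝ), PC α k f A → PC α k g B →
    PC α k (fun z => f z * g z) (c * (A * B)) := by
  induction k with
  | zero =>
    refine ⟨2, by norm_num, fun f g A B h h' => ?_⟩
    have hA := h.nonneg
    have hB := h'.nonneg
    refine ⟨fun z hz => ?_, fun z hz w hw => ?_⟩
    · rw [norm_mul]
      have := mul_le_mul (h.1 z hz) (h'.1 z hz) (norm_nonneg _) hA
      have : 0 ≤ A * B := by positivity
      linarith
    · have e : f z * g z - f w * g w = (f z - f w) * g z + f w * (g z - g w) := by ring
      rw [e]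
      refine (norm_add_le _ _).trans ?_
      rw [norm_mul, norm_mul]
      have e1 := mul_le_mul (h.2 z hz w hw) (h'.1 z hz) (norm_nonneg _) (by positivity)
      have e2 := mul_le_mul (h.1 w hw) (h'.2 z hz w hw) (norm_nonneg _) hA
      linarith
  | succ k ih =>
    obtain ⟨c, hc, ih⟩ := ih
    refine ⟨8 * c + 1, by positivity, fun f g A B h h' => ?_⟩
    have hA := h.nonneg
    have hB := h'.nonneg
    have hf := h.down hα
    have hg := h'.down hα
    obtain ⟨h1, h2, p, q, hp, hq, h3⟩ := h
    obtain ⟨h1', h2', p', q', hp', hq', h3'⟩ := h'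
    have hAB : 0 ≤ A * B := by positivity
    refine ⟨fun z hz => ?_, h2.mul h2', (fun z => p z * g z + f z * p' z),
      (fun z => q z * g z + f z * q' z),
      ((ih _ _ _ _ hp hg).add (ih _ _ _ _ hf hp')).mono (by nlinarith),
      ((ih _ _ _ _ hq hg).add (ih _ _ _ _ hf hq')).mono (by nlinarith), fun z hz => ?_⟩
    · rw [norm_mul]
      have := mul_le_mul (h1 z hz) (h1' z hz) (norm_nonneg _) hA
      nlinarith [mul_nonneg hc hAB]
    · exact (C1.mul ⟨h2, hp.cont hα, hq.cont hα, h3⟩ ⟨h2', hp'.cont hα, hq'.cont hα, h3'⟩).2.2.2 z hz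

lemma T_contOn {α : ℝ} (hα : α ∈ Set.Ioo (0:ℝ) 1) {f : ℂ → ℂ} {B : ℝ} (h : HP α f B) :
    ContinuousOn (Tcg 1 f) DD := by
  obtain ⟨C, hC, hT⟩ := taylorT α hα
  intro a ha
  rw [ContinuousWithinAt, tendsto_iff_norm_sub_tendsto_zero]
  have hc : ContinuousAt (fun z : ℂ => C * B * ‖z - a‖ ^ (1 + α) + ‖f a‖ * ‖z - a‖
      + ‖PiOp f a‖ * ‖z - a‖) a := by
    have : ContinuousAt (fun z : ℂ => ‖z - a‖ ^ (1 + α)) a :=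
      ContinuousAt.rpow_const (by fun_prop) (Or.inr (by linarith [hα.1]))
    fun_prop
  have h0 : Filter.Tendsto (fun z : ℂ => C * B * ‖z - a‖ ^ (1 + α) + ‖f a‖ * ‖z - a‖
      + ‖PiOp f a‖ * ‖z - a‖) (nhdsWithin a DD) (nhds 0) := by
    have := hc.tendsto.mono_left (nhdsWithin_le_nhds (s := DD))
    simpa [Real.zero_rpow (show 1 + α ≠ 0 by linarith [hα.1])] using this
  refine squeeze_zero' (Filter.Eventually.of_forall fun _ => norm_nonneg _) ?_ h0
  filter_upwards [self_mem_nhdsWithin] with z hz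
  have e : Tcg 1 f z - Tcg 1 f a = (Tcg 1 f z - Tcg 1 f a - f a * ((starRingEnd ℂ) z - (starRingEnd ℂ) a)
    - PiOp f a * (z - a)) + f a * ((starRingEnd ℂ) z - (starRingEnd ℂ) a) + PiOp f a * (z - a) := by ring
  rw [e]
  refine (norm_add_le _ _).trans (add_le_add ((norm_add_le _ _).trans (add_le_add (hT f B h z hz a ha) ?_)) ?_)
  · rw [norm_mul, ← map_sub, norm_conj]
  · rw [norm_mul]

lemma PC.hp {α : ℝ} (hα : α ∈ Set.Ioo (0:ℝ) 1) {k : ℕ} : ∀ {f : ℂ → ℂ} {B : ℝ}, PC α k f B →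
    ∃ B', HP α f B' := by
  induction k with
  | zero => intro f B h; exact ⟨B, h⟩
  | succ k ih => intro f B h; exact ih (h.down hα)

lemma T_reg {α : ℝ} (hα : α ∈ Set.Ioo (0:ℝ) 1) (k : ℕ) : ∃ C : ℝ, 0 ≤ C ∧
    ∀ (f : ℂ → ℂ) (B : ℝ), PC α k f B → PC α (k + 1) (Tcg 1 f) (C * B) := by
  obtain ⟨C0, hC0, hb⟩ := T_bound
  induction k with
  | zero =>
    obtain ⟨C1, hC1, hPi⟩ := Pi_holder α hα
    refine ⟨C0 + C1 + 1, by positivity, fun f B h => ?_⟩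
    have hB := h.nonneg
    refine ⟨fun z hz => (hb f B h.bd z hz).trans ?_, T_contOn hα h, PiOp f, f, HP.mono (hPi f B h) ?_,
      h.mono ?_, fun z hz => T_hasFDeriv α hα h hz⟩
    all_goals nlinarith [mul_nonneg hC0 hB, mul_nonneg hC1 hB]
  | succ k ih =>
    obtain ⟨C, hC, ih⟩ := ih
    obtain ⟨c, hc, hmul⟩ := PC.mul hα k
    obtain ⟨c', hc', hmul'⟩ := PC.mul hα (k + 1)
    set K := C * (1 + c * (c * c * 48)) + c' * c' * 16 with hK
    have hK0 : 0 ≤ K := by positivity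
    refine ⟨C0 + K + 1 , by positivity, fun f B h => ?_⟩
    have hB := h.nonneg
    obtain ⟨B', hB'⟩ := h.hp hα
    have hf := h.down hα
    have hbd := h.bd
    have hcf := h.cont hα
    have h' := h
    obtain ⟨h1, h2, p, q, hp, hq, h3⟩ := h
    have cj := (PC.id hα k).conj
    have cj' := (PC.id hα (k + 1)).conj
    have u1 := hmul _ _ _ _ (hmul _ _ _ _ (PC.const k 2) cj) hf
    have u2 := hmul _ _ _ _ (hmul _ _ _ _ cj cj) hq
    have u := hp.add ((hmul _ _ _ _ (PC.const k (-1)) (u1.add u2)))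
    have Tu := ih _ _ u
    have v := hmul' _ _ _ _ (hmul' _ _ _ _ cj' cj') h'
    have w := Tu.add v
    have hbnd : C * (B + c * (‖(-1:ℂ)‖ * (c * (c * (‖(2:ℂ)‖ * 4) * (4 * B)) + c * (c * (4 * 4) * B)))) +
        c' * (c' * (4 * 4) * B) = K * B := by
      rw [hK]
      simp only [norm_neg, norm_one, Complex.norm_ofNat]
      ring
    rw [hbnd] at w
    have hKB : 0 ≤ K * B := by positivity
    have hCB : 0 ≤ C0 * B := by positivity
    refine ⟨fun z hz => (hb f B hbd z hz).trans (by nlinarith), T_contOn hα hB', _, f,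
      w.mono (by nlinarith), h'.mono (by nlinarith), fun z hz => ?_⟩
    have e := keyId hα ⟨hcf, hp.cont hα, hq.cont hα, h3⟩ hz
    have d := T_hasFDeriv α hα hB' hz
    rw [e] at d
    have e1 : (fun ζ => p ζ - (2 * (starRingEnd ℂ) ζ * f ζ + (starRingEnd ℂ) ζ ^ 2 * q ζ)) =
      (fun z => p z + -1 * (2 * (starRingEnd ℂ) z * f z + (starRingEnd ℂ) z * (starRingEnd ℂ) z * q z)) := by
      funext z; ring
    rw [e1, pow_two] at d
    exact d

lemma Tbar_reg {α : ℝ} (hα : α ∈ Set.Ioo (0:ℝ) 1) (k : ℕ) : ∃ C : ℝ, 0 ≤ C ∧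
    ∀ (f : ℂ → ℂ) (B : ℝ), PC α k f B → PC α (k + 1) (Tcgbar 1 f) (C * B) := by
  obtain ⟨C, hC, h⟩ := T_reg hα k
  exact ⟨C, hC, fun f B hf => (h _ _ hf.conj).conj⟩

lemma iter_reg {α : ℝ} (S : (ℂ → ℂ) → (ℂ → ℂ))
    (hS : ∀ k, ∃ C : ℝ, 0 ≤ C ∧ ∀ (f : ℂ → ℂ) (B : ℝ), PC α k f B → PC α (k + 1) (S f) (C * B))
    (k n : ℕ) : ∃ C : ℝ, 0 ≤ C ∧ ∀ (f : ℂ → ℂ) (B : ℝ), PC α k f B → PC α (k + n) (S^[n] f) (C * B) := by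
  induction n with
  | zero => exact ⟨1, zero_le_one, fun f B h => by simpa using h⟩
  | succ n ih =>
    obtain ⟨C, hC, ih⟩ := ih
    obtain ⟨C', hC', hS⟩ := hS (k + n)
    refine ⟨C' * C, by positivity, fun f B h => ?_⟩
    rw [Function.iterate_succ_apply', mul_assoc]
    exact hS _ _ (ih f B h)

lemma TT_reg {α : ℝ} (hα : α ∈ Set.Ioo (0:ℝ) 1) (m n : ℕ) : ∃ C : ℝ, 0 ≤ C ∧
    ∀ (f : ℂ → ℂ) (B : ℝ), HP α f B → PC α (m + n) ((Tcg 1)^[n] ((Tcgbar 1)^[m] f)) (C * B) := by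
  obtain ⟨C, hC, h⟩ := iter_reg (Tcgbar 1) (Tbar_reg hα) 0 m
  obtain ⟨C', hC', h'⟩ := iter_reg (Tcg 1) (T_reg hα) (0 + m) n
  refine ⟨C' * C, by positivity, fun f B hf => ?_⟩
  have := h' _ _ (h f B hf)
  rw [mul_assoc]
  simpa using this



lemma wD_of {f : ℂ → ℂ} {p q z : ℂ} (h : HasFDerivAt f (WW p q) z) : wD f z = p := by
  have hI : I * I = -1 := I_mul_I
  simp only [wD, h.fderiv, WW_apply, map_one, conj_I]
  linear_combination (- p / 2 + q / 2) * hI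

lemma wDbar_of {f : ℂ → ℂ} {p q z : ℂ} (h : HasFDerivAt f (WW p q) z) : wDbar f z = q := by
  have hI : I * I = -1 := I_mul_I
  simp only [wDbar, h.fderiv, WW_apply, map_one, conj_I]
  linear_combination (p / 2 - q / 2) * hI

lemma wD_congr {f g : ℂ → ℂ} {U : Set ℂ} (hU : IsOpen U) (h : Set.EqOn f g U) :
    Set.EqOn (wD f) (wD g) U := fun z hz => by
  simp only [wD, (h.eventuallyEq_of_mem (hU.mem_nhds hz)).fderiv_eq]

lemma wDbar_congr {f g : ℂ → ℂ} {U : Set ℂ} (hU : IsOpen U) (h : Set.EqOn f g U) :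
    Set.EqOn (wDbar f) (wDbar g) U := fun z hz => by
  simp only [wDbar, (h.eventuallyEq_of_mem (hU.mem_nhds hz)).fderiv_eq]

lemma iter_congr {S : (ℂ → ℂ) → (ℂ → ℂ)} {U : Set ℂ}
    (hS : ∀ f g, Set.EqOn f g U → Set.EqOn (S f) (S g) U) (n : ℕ) :
    ∀ f g, Set.EqOn f g U → Set.EqOn (S^[n] f) (S^[n] g) U := by
  induction n with
  | zero => intro f g h; exact h
  | succ n ih =>
    intro f g h
    simp only [Function.iterate_succ_apply]
    exact ih _ _ (hS _ _ h)

lemma iter_ext {α : ℝ} {S : (ℂ → ℂ) → (ℂ → ℂ)}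
    (hS : ∀ f g, Set.EqOn f g UU → Set.EqOn (S f) (S g) UU)
    (hP : ∀ k f B, PC α (k + 1) f B → ∃ g, PC α k g B ∧ Set.EqOn (S f) g UU) (k n : ℕ) :
    ∀ f B, PC α (k + n) f B → ∃ g, PC α k g B ∧ Set.EqOn (S^[n] f) g UU := by
  induction n with
  | zero => intro f B h; exact ⟨f, h, fun z hz => rfl⟩
  | succ n ih =>
    intro f B h
    obtain ⟨g1, h1, e1⟩ := hP (k + n) f B h
    obtain ⟨g, h2, e2⟩ := ih g1 B h1
    refine ⟨g, h2, ?_⟩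
    rw [Function.iterate_succ_apply]
    exact (iter_congr hS n _ _ e1).trans e2

lemma wDij_ext {α : ℝ} (k i j : ℕ) {f : ℂ → ℂ} {B : ℝ} (h : PC α (k + i + j) f B) :
    ∃ g, PC α k g B ∧ Set.EqOn (wDij i j f) g UU := by
  have h1 : ∀ f g, Set.EqOn f g UU → Set.EqOn (wD f) (wD g) UU := fun f g => wD_congr isOpen_ball
  have h2 : ∀ f g, Set.EqOn f g UU → Set.EqOn (wDbar f) (wDbar g) UU :=
    fun f g => wDbar_congr isOpen_ball
  obtain ⟨g1, hg1, e1⟩ := iter_ext h2 (fun k f B ⟨_, _, p, q, hp, hq, h3⟩ =>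
    ⟨q, hq, fun z hz => wDbar_of (h3 z hz)⟩) (k + i) j f B h
  obtain ⟨g2, hg2, e2⟩ := iter_ext h1 (fun k f B ⟨_, _, p, q, hp, hq, h3⟩ =>
    ⟨p, hp, fun z hz => wD_of (h3 z hz)⟩) k i g1 B hg1
  exact ⟨g2, hg2, (iter_congr h1 i _ _ e1).trans e2⟩

lemma PC.contDiff {α : ℝ} (hα : α ∈ Set.Ioo (0:ℝ) 1) {k : ℕ} : ∀ {f : ℂ → ℂ} {B : ℝ}, PC α k f B →
    ContDiffOn ℝ k f UU := by
  induction k with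
  | zero =>
    intro f B h
    exact contDiffOn_zero.2 ((h.cont hα).mono ball_subset_closedBall)
  | succ k ih =>
    intro f B h
    obtain ⟨_, _, p, q, hp, hq, h3⟩ := h
    push_cast
    rw [contDiffOn_succ_iff_fderiv_of_isOpen isOpen_ball]
    refine ⟨fun z hz => (h3 z hz).differentiableAt.differentiableWithinAt, by simp, ?_⟩
    have e : ContDiffOn ℝ k (fun z => WW (p z) (q z)) UU :=
      ((ih hp).smul contDiffOn_const).add ((ih hq).smul contDiffOn_const)
    exact e.congr fun z hz => (h3 z hz).fderiv

lemma fd_scale (u : ℂ → ℂ) (c : ℂ) (a : ℝ) (z v : ℂ) :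
    fderiv ℝ (fun z => c * u (a • z)) z v = c * a * fderiv ℝ u (a • z) v := by
  have : (fun z => c * u (a • z)) = c • (fun z => u (a • z)) := rfl
  rw [this, fderiv_const_smul_field, Pi.smul_apply, fderiv_comp_smul]
  simp [mul_assoc]

lemma wD_scale (c : ℂ) (a : ℝ) (u : ℂ → ℂ) :
    wD (fun z => c * u (a • z)) = fun z => (c * a) * wD u (a • z) := by
  funext z
  simp only [wD, fd_scale]
  ring

lemma wDbar_scale (c : ℂ) (a : ℝ) (u : ℂ → ℂ) :
    wDbar (fun z => c * u (a • z)) = fun z => (c * a) * wDbar u (a • z) := by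
  funext z
  simp only [wDbar, fd_scale]
  ring

lemma iter_scale {S : (ℂ → ℂ) → (ℂ → ℂ)} {a : ℝ}
    (hS : ∀ (c : ℂ) u, S (fun z => c * u (a • z)) = fun z => (c * a) * S u (a • z)) (n : ℕ) :
    ∀ (c : ℂ) u, S^[n] (fun z => c * u (a • z)) = fun z => (c * a ^ n) * S^[n] u (a • z) := by
  induction n with
  | zero => intro c u; simp
  | succ n ih =>
    intro c u
    rw [Function.iterate_succ_apply, hS, ih, Function.iterate_succ_apply]
    funext z; ring

lemma wDij_scale (i j : ℕ) (c : ℂ) (a : ℝ) (u : ℂ → ℂ) :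
    wDij i j (fun z => c * u (a • z)) = fun z => (c * a ^ (i + j)) * wDij i j u (a • z) := by
  unfold wDij
  rw [iter_scale (fun c u => wDbar_scale c a u), iter_scale (fun c u => wD_scale c a u)]
  funext z; ring

lemma T_scale {R : ℝ} (hR : 0 < R) (h : ℂ → ℂ) (z : ℂ) :
    Tcg R h (R • z) = R * Tcg 1 (fun z => h (R • z)) z := by
  unfold Tcg
  have := Measure.setIntegral_comp_smul_of_pos (μ := volume)
    (fun ζ : ℂ => h ζ / (ζ - R • z)) (closedBall (0:ℂ) 1) hR
  rw [smul_unitClosedBall, Complex.finrank_real_complex, Real.norm_of_nonneg hR.le] at this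
  have hR' : (R:ℂ) ≠ 0 := by exact_mod_cast hR.ne'
  have e : (fun x : ℂ => h (R • x) / (R • x - R • z)) = fun x => (R:ℂ)⁻¹ * (h (R • x) / (x - z)) := by
    funext x
    rw [← smul_sub, real_smul (z := x - z), div_mul_eq_div_div, div_right_comm, div_eq_inv_mul]
  rw [e, integral_const_mul, real_smul] at this
  push_cast at this
  have t2 : ∫ x in closedBall (0:ℂ) R, h x / (x - R • z) = 
     R * ∫ x in closedBall (0:ℂ) 1, h (R • x) / (x - z) := by
    field_simp at this
    rw [← this]
  rw [t2]
  ring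

lemma Tbar_scale {R : ℝ} (hR : 0 < R) (h : ℂ → ℂ) (z : ℂ) :
    Tcgbar R h (R • z) = R * Tcgbar 1 (fun z => h (R • z)) z := by
  unfold Tcgbar
  rw [T_scale hR, map_mul, conj_ofReal]

lemma T_const (c : ℝ) (h : ℂ → ℂ) : Tcg 1 (fun z => c * h z) = fun z => c * Tcg 1 h z := by
  funext z
  unfold Tcg
  simp only [mul_div_assoc]
  rw [integral_const_mul]
  ring

lemma Tbar_const (c : ℝ) (h : ℂ → ℂ) : Tcgbar 1 (fun z => c * h z) = fun z => c * Tcgbar 1 h z := by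
  funext z
  unfold Tcgbar
  simp only [map_mul, conj_ofReal]
  rw [T_const, map_mul, conj_ofReal]

lemma iterT_scale {R : ℝ} {S S1 : (ℂ → ℂ) → (ℂ → ℂ)}
    (hs : ∀ h z, S h (R • z) = R * S1 (fun z => h (R • z)) z)
    (hc : ∀ (c : ℝ) h, S1 (fun z => c * h z) = fun z => c * S1 h z) (n : ℕ) :
    ∀ h z, S^[n] h (R • z) = (R ^ n : ℝ) * S1^[n] (fun z => h (R • z)) z := by
  induction n with
  | zero => intro h z; simp
  | succ n ih =>
    intro h z
    rw [Function.iterate_succ_apply', hs, Function.iterate_succ_apply']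
    have : (fun z => S^[n] h (R • z)) = fun z => ((R ^ n : ℝ) : ℂ) * S1^[n] (fun z => h (R • z)) z :=
      funext fun z => ih h z
    rw [this, hc]
    push_cast
    ring

lemma iter_const {S1 : (ℂ → ℂ) → (ℂ → ℂ)}
    (hc : ∀ (c : ℝ) h, S1 (fun z => c * h z) = fun z => c * S1 h z) (n : ℕ) (c : ℝ) :
    ∀ h, S1^[n] (fun z => c * h z) = fun z => c * S1^[n] h z := by
  induction n with
  | zero => intro h; simp
  | succ n ih =>
    intro h
    rw [Function.iterate_succ_apply, hc, ih, Function.iterate_succ_apply]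

lemma TT_scale {R : ℝ} (hR : 0 < R) (m n : ℕ) (h : ℂ → ℂ) :
    (Tcg R)^[n] ((Tcgbar R)^[m] h) = fun z => (R:ℂ) ^ (m + n) *
      (Tcg 1)^[n] ((Tcgbar 1)^[m] (fun z => h (R • z))) (R⁻¹ • z) := by
  funext z
  have e : z = R • (R⁻¹ • z) := by rw [smul_smul, mul_inv_cancel₀ hR.ne', one_smul]
  conv_lhs => rw [e]
  rw [iterT_scale (T_scale hR) T_const n]
  have : (fun z => (Tcgbar R)^[m] h (R • z)) =
      fun z => ((R ^ m : ℝ) : ℂ) * (Tcgbar 1)^[m] (fun z => h (R • z)) z :=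
    funext fun z => iterT_scale (Tbar_scale hR) Tbar_const m h z
  rw [this, iter_const T_const]
  push_cast
  ring

lemma hol_le {α : ℝ} (hα : 0 < α) {A : Set ℂ} {f : ℂ → ℂ} {K : ℝ} 
    (h : ∀ z ∈ A, ∀ w ∈ A, ‖f z - f w‖ ≤ K * ‖z - w‖ ^ α) : Hol α A f ≤ ENNReal.ofReal K := by
  unfold Hol
  refine iSup₂_le fun z hz => iSup₂_le fun w hw => iSup_le fun hne => ?_
  refine ENNReal.div_le_of_le_mul ?_
  rw [← enorm_eq_nnnorm, ← enorm_eq_nnnorm, ← ofReal_norm, ← ofReal_norm,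
    ENNReal.ofReal_rpow_of_nonneg (norm_nonneg _) hα.le, ← ENNReal.ofReal_mul' (by positivity)]
  exact ENNReal.ofReal_le_ofReal (h z hz w hw)

lemma le_hol {α : ℝ} (hα : 0 < α) {A : Set ℂ} {f : ℂ → ℂ} (hf : Hol α A f < ⊤) :
    ∀ z ∈ A, ∀ w ∈ A, ‖f z - f w‖ ≤ (Hol α A f).toReal * ‖z - w‖ ^ α := by
  intro z hz w hw
  rcases eq_or_ne z w with rfl | hne
  · simp; positivity
  have h1 : (‖f z - f w‖₊ : ℝ≥0∞) / (‖z - w‖₊ : ℝ≥0∞) ^ α ≤ Hol α A f := by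
    unfold Hol
    refine le_trans ?_ (le_iSup₂ z hz)
    refine le_trans ?_ (le_iSup₂ w hw)
    exact le_iSup (fun _ : z ≠ w => (‖f z - f w‖₊ : ℝ≥0∞) / (‖z - w‖₊ : ℝ≥0∞) ^ α) hne
  have hp : 0 < ‖z - w‖ := norm_pos_iff.2 (sub_ne_zero.2 hne)
  have h2 := ENNReal.toReal_mono hf.ne h1
  rw [ENNReal.toReal_div, ← ENNReal.toReal_rpow] at h2
  simp only [coe_toReal, coe_nnnorm] at h2
  rwa [div_le_iff₀ (by positivity)] at h2

lemma hnorm_HP {α : ℝ} (hα : α ∈ Set.Ioo (0:ℝ) 1) {R : ℝ} (hR : 0 < R) {h : ℂ → ℂ}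
    (hf : Hol α (closedBall (0:ℂ) R) h < ⊤) :
    hnorm α R h ≠ ⊤ ∧ HP α (fun z => h (R • z)) (hnorm α R h).toReal := by
  have hl := le_hol hα.1 hf
  set H := (Hol α (closedBall (0:ℂ) R) h).toReal with hH
  have hH0 : 0 ≤ H := ENNReal.toReal_nonneg
  have h0 : (0:ℂ) ∈ closedBall (0:ℂ) R := by simp [hR.le]
  have hs : (⨆ z ∈ closedBall (0:ℂ) R, (‖h z‖₊ : ℝ≥0∞)) < ⊤ := by
    refine lt_of_le_of_lt (iSup₂_le (a := ENNReal.ofReal (‖h 0‖ + H * R ^ α)) fun z hz => ?_) ENNReal.ofReal_lt_top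
    rw [← enorm_eq_nnnorm, ← ofReal_norm]
    refine ENNReal.ofReal_le_ofReal ?_
    have h1 := hl z hz 0 h0
    have h2 : ‖h z‖ ≤ ‖h 0‖ + ‖h z - h 0‖ := norm_le_norm_add_norm_sub' _ _
    have h3 : ‖z - 0‖ ^ α ≤ R ^ α := by
      rw [sub_zero]
      exact Real.rpow_le_rpow (norm_nonneg _) (by simpa using hz) hα.1.le
    have := mul_le_mul_of_nonneg_left h3 hH0
    linarith
  have ht : ENNReal.ofReal ((2*R) ^ α) * Hol α (closedBall (0:ℂ) R) h < ⊤ :=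
    ENNReal.mul_lt_top ENNReal.ofReal_lt_top hf
  have hfin : hnorm α R h ≠ ⊤ := (ENNReal.add_lt_top.2 ⟨hs, ht⟩).ne
  have mem : ∀ z ∈ DD, R • z ∈ closedBall (0:ℂ) R := by
    intro z hz
    simp only [mem_closedBall_zero_iff, norm_smul, Real.norm_of_nonneg hR.le] at hz ⊢
    nlinarith
  refine ⟨hfin, fun z hz => ?_, fun z hz w hw => ?_⟩
  · have h1 : (‖h (R • z)‖₊ : ℝ≥0∞) ≤ hnorm α R h :=
      le_trans (le_iSup₂ (f := fun z (_ : z ∈ closedBall (0:ℂ) R) => (‖h z‖₊ : ℝ≥0∞)) (R • z) (mem z hz)) le_self_add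
    simpa using ENNReal.toReal_mono hfin h1
  · have h1 : ENNReal.ofReal ((2*R) ^ α) * Hol α (closedBall (0:ℂ) R) h ≤ hnorm α R h := le_add_self
    have h2 := ENNReal.toReal_mono hfin h1
    rw [ENNReal.toReal_mul, ENNReal.toReal_ofReal (by positivity), ← hH] at h2
    refine (hl _ (mem z hz) _ (mem w hw)).trans ?_
    rw [← smul_sub, norm_smul, Real.norm_of_nonneg hR.le, Real.mul_rpow hR.le (norm_nonneg _), ← mul_assoc]
    gcongr
    refine le_trans ?_ h2
    rw [mul_comm]
    exact mul_le_mul_of_nonneg_right (Real.rpow_le_rpow hR.le (by linarith) hα.1.le) hH0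



lemma scaled_hol {α : ℝ} (hα : α ∈ Set.Ioo (0:ℝ) 1) {R B : ℝ} (hR : 0 < R) {g F : ℂ → ℂ}
    (hg : HP α g B) (hF : Set.EqOn F (fun z => g (R⁻¹ • z)) (ball (0:ℂ) R)) :
    Hol α (ball (0:ℂ) R) F ≤ ENNReal.ofReal (B * (R ^ α)⁻¹) ∧
    hnormB α R F ≤ ENNReal.ofReal (3 * B) := by
  have hB := hg.nonneg
  have mem : ∀ z ∈ ball (0:ℂ) R, R⁻¹ • z ∈ DD := by
    intro z hz
    simp only [mem_closedBall_zero_iff, mem_ball_zero_iff, norm_smul, norm_inv,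
      Real.norm_of_nonneg hR.le] at hz ⊢
    rw [inv_mul_le_one₀ hR]
    exact hz.le
  have h1 : Hol α (ball (0:ℂ) R) F ≤ ENNReal.ofReal (B * (R ^ α)⁻¹) := by
    refine hol_le hα.1 fun z hz w hw => ?_
    rw [hF hz, hF hw]
    refine (hg.2 _ (mem z hz) _ (mem w hw)).trans (le_of_eq ?_)
    rw [← smul_sub, norm_smul, norm_inv, Real.norm_of_nonneg hR.le,
      Real.mul_rpow (by positivity) (norm_nonneg _), Real.inv_rpow hR.le, mul_assoc]
  refine ⟨h1, ?_⟩
  have h2 : (⨆ z ∈ ball (0:ℂ) R, (‖F z‖₊ : ℝ≥0∞)) ≤ ENNReal.ofReal B := by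
    refine iSup₂_le fun z hz => ?_
    rw [← enorm_eq_nnnorm, ← ofReal_norm, hF hz]
    exact ENNReal.ofReal_le_ofReal (hg.1 _ (mem z hz))
  have h2a : (2:ℝ) ^ α ≤ 2 := by
    calc (2:ℝ) ^ α ≤ 2 ^ (1:ℝ) := Real.rpow_le_rpow_of_exponent_le (by norm_num) hα.2.le
      _ = 2 := by simp
  have hRα : 0 < R ^ α := by positivity
  unfold hnormB
  calc _ ≤ ENNReal.ofReal B + ENNReal.ofReal ((2*R) ^ α) * ENNReal.ofReal (B * (R ^ α)⁻¹) := by gcongr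
    _ = ENNReal.ofReal (B + (2*R) ^ α * (B * (R ^ α)⁻¹)) := by
      rw [← ENNReal.ofReal_mul (by positivity), ENNReal.ofReal_add hB (by positivity)]
    _ ≤ ENNReal.ofReal (3 * B) := by
      refine ENNReal.ofReal_le_ofReal ?_
      rw [Real.mul_rpow (by norm_num) hR.le]
      have : 2 ^ α * R ^ α * (B * (R ^ α)⁻¹) = 2 ^ α * B := by field_simp
      rw [this]
      nlinarith

theorem iterated_Tcg_norm_bound (m μ ν : ℕ) (hm : 1 ≤ m) (hμν : μ + ν = m)
    (α : ℝ) (hα : α ∈ Set.Ioo (0:ℝ) 1) :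
    ∃ C : ℝ, 0 < C ∧ ∀ R : ℝ, 0 < R → R ≤ 1 → ∀ h : ℂ → ℂ,
      Hol α (closedBall (0:ℂ) R) h < ⊤ →
        CkHolderBall m α R ((Tcg R)^[ν] ((Tcgbar R)^[μ] h)) ∧
        hnormKB m α R ((Tcg R)^[ν] ((Tcgbar R)^[μ] h)) ≤
          ENNReal.ofReal C * hnorm α R h := by
  obtain ⟨C, hC, hreg⟩ := TT_reg hα μ ν
  refine ⟨3 * C + 1, by positivity, fun R hR hR1 h hh => ?_⟩
  obtain ⟨hfin, hHP⟩ := hnorm_HP hα hR hh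
  have hB := hHP.nonneg
  have hPC := hreg _ _ hHP
  rw [TT_scale hR]
  rw [hμν] at hPC ⊢
  set G := (Tcg 1)^[ν] ((Tcgbar 1)^[μ] (fun z => h (R • z))) with hG
  have memU : ∀ z ∈ ball (0:ℂ) R, R⁻¹ • z ∈ UU := by
    intro z hz
    simp only [mem_ball_zero_iff, norm_smul, norm_inv, Real.norm_of_nonneg hR.le] at hz ⊢
    rw [inv_mul_lt_one₀ hR]
    exact hz
  have memD : ∀ z ∈ closedBall (0:ℂ) R, R⁻¹ • z ∈ DD := by
    intro z hz
    simp only [mem_closedBall_zero_iff, norm_smul, norm_inv, Real.norm_of_nonneg hR.le] at hz ⊢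
    rw [inv_mul_le_one₀ hR]
    exact hz
  have hRc : (R:ℂ) ≠ 0 := by exact_mod_cast hR.ne'
  have key : ∀ i j : ℕ, i + j = m →
      Hol α (ball (0:ℂ) R) (wDij i j (fun z => (R:ℂ) ^ m * G (R⁻¹ • z))) < ⊤ ∧
      hnormB α R (wDij i j (fun z => (R:ℂ) ^ m * G (R⁻¹ • z))) ≤
        ENNReal.ofReal (3 * (C * (hnorm α R h).toReal)) := by
    intro i j hij
    obtain ⟨g, hg, e⟩ := wDij_ext (α := α) 0 i j (f := G) (by rw [zero_add, hij]; exact hPC)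
    have := scaled_hol (F := wDij i j (fun z => (R:ℂ) ^ m * G (R⁻¹ • z))) hα hR hg (fun z hz => by
      rw [wDij_scale, hij]
      simp only
      rw [e (memU z hz)]
      push_cast
      rw [inv_pow, mul_inv_cancel₀ (pow_ne_zero _ hRc), one_mul])
    exact ⟨this.1.trans_lt ENNReal.ofReal_lt_top, this.2⟩
  refine ⟨⟨?_, ?_, fun i j hij => (key i j hij).1⟩, ?_⟩
  · refine contDiffOn_const.mul ((hPC.contDiff hα).comp ?_ memU)
    exact (contDiff_const_smul (R⁻¹)).contDiffOn
  · intro i j hij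
    obtain ⟨k, rfl⟩ := Nat.exists_eq_add_of_le' hij
    obtain ⟨g, hg, e⟩ := wDij_ext (α := α) k i j (f := G) (by rw [add_assoc]; exact hPC)
    refine ⟨fun z => ((R:ℂ) ^ (k + (i + j)) * ((R⁻¹ : ℝ) : ℂ) ^ (i + j)) * g (R⁻¹ • z), ?_, fun z hz => ?_⟩
    · exact continuousOn_const.mul ((hg.cont hα).comp (continuous_const_smul (R⁻¹)).continuousOn memD)
    · rw [wDij_scale]
      simp only
      rw [e (memU z hz)]
  · refine iSup₂_le fun p hp => ((key p.1 p.2 (Finset.HasAntidiagonal.mem_antidiagonal.1 hp)).2).trans ?_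
    conv_rhs => rw [← ENNReal.ofReal_toReal hfin]
    rw [← ENNReal.ofReal_mul (by positivity)]
    refine ENNReal.ofReal_le_ofReal ?_
    nlinarith
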